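/- arXiv:math/0608375 — 2 statements merged into one kernel-verified Lean document; each statement's English description precedes it below -/
import Mathlib

section
/- Let μ : [0,∞) → [0,1] be nonincreasing with ∫₀^t μ(s) ds ≤ K·log(1+t) for all t > 0 and some K > 0. Let ω be a linear functional on L∞((0,∞)) which is positive (ω(f) ≥ 0 whenever f ≥ 0 a.e.), satisfies ess liminf_{t → +∞} f(t) ≤ ω(f) ≤ ess limsup_{t → +∞} f(t) for every real-valued f ∈ L∞((0,∞)), and satisfies ω ∘ D_c = ω, ω ∘ P^a = ω and ω ∘ M = ω for all c > 0 and a > 0. Define g(t) = (1/log(1+t))∫₀^t μ(s) ds for t > 0, and F(t) = (1/log t)∫₀^∞ μ(s)^{1 + 1/log t} ds for t > e, F(t) = 0 for 0 < t ≤ e. Then g and F are bounded and ω(g) = ω(F). (This expresses the Dixmier trace of a positive operator with singular value function μ as an ω-limit of residues (1/r)∫₀^∞ μ(s)^{1+1/r} ds of its zeta function, via the substitution r = log t.) -/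
open Filter MeasureTheory

/-- A function is (everywhere) bounded. -/
def BddFun (f : ℝ → ℝ) : Prop := ∃ C : ℝ, ∀ x, |f x| ≤ C

/-- The logarithmic Cesàro operator: `(Mf)(t) = (1/log t)∫₁^t f(s) ds/s` for `t > 1`,
and `0` otherwise. -/
noncomputable def Mop (f : ℝ → ℝ) : ℝ → ℝ := fun t =>
  if 1 < t then (∫ s in (1:ℝ)..t, f s / s) / Real.log t else 0

/-- `g(t) = (1/log(1+t)) ∫₀^t μ(s) ds` for `t > 0` (and `0` for `t ≤ 0`). -/
noncomputable def gFn (μ : ℝ → ℝ) : ℝ → ℝ := fun t =>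
  if 0 < t then (∫ s in (0:ℝ)..t, μ s) / Real.log (1 + t) else 0

/-- `F(t) = (1/log t) ∫₀^∞ μ(s)^{1 + 1/log t} ds` for `t > e` (and `0` for `t ≤ e`). -/
noncomputable def zetaFn (μ : ℝ → ℝ) : ℝ → ℝ := fun t =>
  if Real.exp 1 < t then
    (∫ s in Set.Ioi (0:ℝ), μ s ^ (1 + 1 / Real.log t)) / Real.log t
  else 0

section aux

/-- superlevel set -/
def lvl (μ : ℝ → ℝ) (u : ℝ) : Set ℝ := {s | 0 < s ∧ Real.exp (-u) < μ s}

/-- integral of `μ` over the superlevel set -/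
noncomputable def bet (μ : ℝ → ℝ) (u : ℝ) : ℝ := ∫ s in lvl μ u, μ s

noncomputable def bFn (μ : ℝ → ℝ) (v : ℝ) : ℝ → ℝ := fun t =>
  if Real.exp 1 < t then bet μ (v * Real.log t) / Real.log t else 0

/-- standing assumptions -/
structure Std (μ : ℝ → ℝ) (K : ℝ) : Prop where
  nn : ∀ s, 0 ≤ μ s
  le1 : ∀ s, μ s ≤ 1
  anti : Antitone μ
  Kpos : 0 < K
  hint : ∀ t : ℝ, 0 < t → (∫ s in (0:ℝ)..t, μ s) ≤ K * Real.log (1 + t)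

variable {μ : ℝ → ℝ} {K : ℝ}

lemma lvl_meas (h : Std μ K) (u : ℝ) : MeasurableSet (lvl μ u) := by
  have h1 : Measurable μ := h.anti.measurable
  exact (measurableSet_lt measurable_const measurable_id).inter
    (measurableSet_lt measurable_const h1)

lemma lvl_sub {u w : ℝ} (huw : u ≤ w) : lvl μ u ⊆ lvl μ w := by
  rintro s ⟨h1, h2⟩
  exact ⟨h1, lt_of_le_of_lt (Real.exp_le_exp.2 (by linarith)) h2⟩

lemma lvl_subIoi (u : ℝ) : lvl μ u ⊆ Set.Ioi 0 := fun _ h => h.1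

lemma lvl_zero (h : Std μ K) : lvl μ 0 = ∅ := by
  ext s
  simp only [lvl, neg_zero, Real.exp_zero, Set.mem_ofPred_eq, Set.mem_empty_iff_false, iff_false,
    not_and, not_lt]
  exact fun _ => h.le1 s

lemma pow_meas (h : Std μ K) (p : ℝ) : Measurable (fun s => μ s ^ p) :=
  h.anti.measurable.pow_const p

lemma integ_fin (h : Std μ K) {S : Set ℝ} (hS : volume S < ⊤) {p : ℝ} (hp : 0 ≤ p) :
    IntegrableOn (fun s => μ s ^ p) S := by
  refine Measure.integrableOn_of_bounded (M := 1) hS.ne (pow_meas h p).aestronglyMeasurable ?_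
  refine ae_of_all _ fun s => ?_
  rw [Real.norm_eq_abs, abs_of_nonneg (Real.rpow_nonneg (h.nn s) p)]
  exact Real.rpow_le_one (h.nn s) (h.le1 s) hp

lemma integ_fin1 (h : Std μ K) {S : Set ℝ} (hS : volume S < ⊤) : IntegrableOn μ S := by
  simpa using integ_fin h hS (p := 1) zero_le_one

lemma size_lvl (h : Std μ K) {a : ℝ} (ha : 1 < a) :
    ∃ w0, ∀ w, w0 ≤ w → lvl μ w ⊆ Set.Ioc 0 (Real.exp (a * w)) := by
  have he : 0 < 1 - 1 / a := by
    have : 1 / a < 1 := by rw [div_lt_one (by linarith)]; exact ha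
    linarith
  have hev : ∀ᶠ s : ℝ in atTop, K * Real.log (1 + s) ≤ s ^ (1 - 1 / a) := by
    have h1 := (isLittleO_log_rpow_atTop he).bound (c := 1 / (2 * K))
      (by have := h.Kpos; positivity)
    filter_upwards [h1, eventually_ge_atTop 2] with s hs h2
    have h3 : Real.log (1 + s) ≤ 2 * Real.log s := by
      rw [← Real.log_rpow (by linarith)]
      apply Real.log_le_log (by linarith)
      norm_cast
      nlinarith
    rw [Real.norm_eq_abs, Real.norm_eq_abs, abs_of_nonneg (Real.log_nonneg (by linarith)),
      abs_of_nonneg (Real.rpow_nonneg (by linarith) _)] at hs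
    have hK := h.Kpos
    calc K * Real.log (1 + s) ≤ K * (2 * Real.log s) := by gcongr
      _ ≤ K * (2 * (1 / (2 * K) * s ^ (1 - 1 / a))) := by gcongr
      _ = s ^ (1 - 1 / a) := by field_simp
  obtain ⟨s0, hs0⟩ := eventually_atTop.1 hev
  refine ⟨max s0 0, fun w hw s hs => ⟨hs.1, ?_⟩⟩
  by_contra! hlt
  have hw0 : 0 ≤ w := le_trans (le_max_right _ _) hw
  have hws : s0 ≤ s := by
    have h1 : w ≤ a * w := by nlinarith
    have h2 := Real.add_one_le_exp (a * w)
    have := le_max_left s0 0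
    linarith
  have h1 := hs0 s hws
  have hs1 := hs.1
  have h2 := h.hint s hs.1
  have h3 : s * Real.exp (-w) ≤ ∫ x in (0:ℝ)..s, μ x := by
    have : ∫ x in (0:ℝ)..s, Real.exp (-w) = s * Real.exp (-w) := by simp
    rw [← this]
    apply intervalIntegral.integral_mono_on hs1.le (by simp)
      (h.anti.intervalIntegrable)
    intro x hx
    exact hs.2.le.trans (h.anti hx.2)
  have h4 : w < Real.log s / a := by
    rw [lt_div_iff₀ (by linarith), Real.lt_log_iff_exp_lt hs1, mul_comm]
    exact hlt
  have h5 : s ^ (1 - 1 / a) < s * Real.exp (-w) := by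
    rw [sub_eq_add_neg, Real.rpow_add hs1, Real.rpow_one]
    have : s ^ (-(1 / a)) < Real.exp (-w) := by
      rw [Real.rpow_def_of_pos hs1]
      apply Real.exp_lt_exp.2
      have : Real.log s * -(1 / a) = -(Real.log s / a) := by ring
      linarith
    gcongr
  linarith

lemma vol_lvl (h : Std μ K) (u : ℝ) : volume (lvl μ u) < ⊤ := by
  obtain ⟨w0, hw⟩ := size_lvl h (a := 2) (by norm_num)
  exact lt_of_le_of_lt (measure_mono ((lvl_sub (le_max_left u w0)).trans
    (hw _ (le_max_right u w0)))) measure_Ioc_lt_top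

lemma bet_mono (h : Std μ K) : Monotone (bet μ) := by
  intro u w huw
  exact setIntegral_mono_set (integ_fin1 h (vol_lvl h w)) (ae_of_all _ h.nn)
    (lvl_sub huw).eventuallyLE

lemma bet_nn (h : Std μ K) (u : ℝ) : 0 ≤ bet μ u :=
  setIntegral_nonneg (lvl_meas h u) fun s _ => h.nn s

lemma bet_zero (h : Std μ K) : bet μ 0 = 0 := by
  simp [bet, lvl_zero h]

lemma bet_le_int (h : Std μ K) {w N : ℝ} (hN : 0 ≤ N) (hs : lvl μ w ⊆ Set.Ioc 0 N) :
    bet μ w ≤ ∫ s in (0:ℝ)..N, μ s := by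
  rw [intervalIntegral.integral_of_le hN]
  exact setIntegral_mono_set (integ_fin1 h measure_Ioc_lt_top) (ae_of_all _ h.nn)
    hs.eventuallyLE

lemma bet_bound (h : Std μ K) : ∃ C, 0 < C ∧ ∀ u, 1 ≤ u → bet μ u ≤ C * u := by
  obtain ⟨w0, hw⟩ := size_lvl h (a := 2) (by norm_num)
  have hK := h.Kpos
  refine ⟨3 * K + bet μ w0, by have := bet_nn h w0; positivity, fun u hu => ?_⟩
  rcases le_total u w0 with h1 | h1
  · have h2 := bet_mono h h1
    have h3 := bet_nn h w0
    nlinarith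
  · have h2 := bet_le_int h (Real.exp_pos _).le (hw u h1)
    have h3 := h.hint _ (Real.exp_pos (2 * u))
    have h4 : Real.log (1 + Real.exp (2 * u)) ≤ 3 * u := by
      rw [Real.log_le_iff_le_exp (by positivity)]
      have e1 : Real.exp (3 * u) = Real.exp (2 * u) * Real.exp u := by
        rw [← Real.exp_add]; ring_nf
      rw [e1]
      have := Real.add_one_le_exp u
      have := Real.one_le_exp (x := 2 * u) (by linarith)
      nlinarith
    have h5 := bet_nn h w0
    nlinarith

lemma pow_split (h : Std μ K) {x y : ℝ} (hx : 0 < x) (hy : 0 < y) (s : ℝ) :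
    μ s ^ (x + y) = μ s ^ x * μ s ^ y := Real.rpow_add_of_nonneg (h.nn s) hx.le hy.le

lemma off_lvl {w s : ℝ} (hs : 0 < s) (h : s ∉ lvl μ w) : μ s ≤ Real.exp (-w) := by
  by_contra! hh
  exact h ⟨hs, hh⟩

lemma pow_le_off (h : Std μ K) {w s q : ℝ} (hs : 0 < s) (hn : s ∉ lvl μ w) (hq : 0 ≤ q) :
    μ s ^ q ≤ Real.exp (-w * q) := by
  rw [Real.exp_mul]
  exact Real.rpow_le_rpow (h.nn s) (off_lvl hs hn) hq

lemma slice (h : Std μ K) {u w r : ℝ} (huw : u ≤ w) (hr : 0 < r) :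
    Real.exp (-w / r) * (bet μ w - bet μ u) ≤
      (∫ s in lvl μ w, μ s ^ (1 + 1 / r)) - (∫ s in lvl μ u, μ s ^ (1 + 1 / r)) ∧
    (∫ s in lvl μ w, μ s ^ (1 + 1 / r)) - (∫ s in lvl μ u, μ s ^ (1 + 1 / r)) ≤
      Real.exp (-u / r) * (bet μ w - bet μ u) := by
  have hr' : 0 < 1 / r := by positivity
  have hp : 0 ≤ 1 + 1 / r := by positivity
  have hms := (lvl_meas h w).diff (lvl_meas h u)
  have i1 := integ_fin h (vol_lvl h w) hp
  have i2 := integ_fin1 h (vol_lvl h w)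
  have e1 := setIntegral_sdiff (lvl_meas h u) i1 (lvl_sub huw)
  have e2 := setIntegral_sdiff (lvl_meas h u) i2 (lvl_sub huw)
  unfold bet
  rw [← e1, ← e2, ← integral_const_mul, ← integral_const_mul]
  have j1 := i1.mono_set (Set.sdiff_subset (t := lvl μ u))
  have j2 := i2.mono_set (Set.sdiff_subset (t := lvl μ u))
  constructor
  · refine setIntegral_mono_on (j2.const_mul _) j1 hms ?_
    rintro s ⟨hs, -⟩
    rw [pow_split h one_pos hr', Real.rpow_one, mul_comm]
    refine mul_le_mul_of_nonneg_left ?_ (h.nn s)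
    rw [div_eq_mul_one_div, Real.exp_mul]
    exact Real.rpow_le_rpow (Real.exp_pos _).le hs.2.le hr'.le
  · refine setIntegral_mono_on j1 (j2.const_mul _) hms ?_
    rintro s ⟨hs, hs2⟩
    rw [pow_split h one_pos hr', Real.rpow_one, mul_comm]
    refine mul_le_mul_of_nonneg_right ?_ (h.nn s)
    rw [div_eq_mul_one_div (-u)]
    exact pow_le_off h hs.1 hs2 hr'.le

lemma off_split (h : Std μ K) {w s r : ℝ} (hr : 0 < r) (hs : 0 < s) (hn : s ∉ lvl μ w) :
    μ s ^ (1 + 1 / r) ≤ Real.exp (-w / (2 * r)) * μ s ^ (1 + 1 / (2 * r)) := by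
  have e : 1 + 1 / r = (1 + 1 / (2 * r)) + 1 / (2 * r) := by field_simp; ring
  rw [e, pow_split h (by positivity) (by positivity), mul_comm]
  refine mul_le_mul_of_nonneg_right ?_ (Real.rpow_nonneg (h.nn s) _)
  rw [div_eq_mul_one_div (-w)]
  exact pow_le_off h hs hn (by positivity)

lemma pow_le_self (h : Std μ K) {r : ℝ} (hr : 0 < r) (s : ℝ) : μ s ^ (1 + 1 / r) ≤ μ s := by
  rw [pow_split h one_pos (by positivity), Real.rpow_one]
  exact mul_le_of_le_one_right (h.nn s) (Real.rpow_le_one (h.nn s) (h.le1 s) (by positivity))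

lemma trunc_rec (h : Std μ K) {r : ℝ} (hr : 0 < r) (T : ℝ) :
    (∫ s in Set.Ioc 0 T, μ s ^ (1 + 1 / r)) ≤
      bet μ (4 * r) + Real.exp (-2) * ∫ s in Set.Ioc 0 T, μ s ^ (1 + 1 / (2 * r)) := by
  have hp : 0 ≤ 1 + 1 / r := by positivity
  have hp2 : 0 ≤ 1 + 1 / (2 * r) := by positivity
  have i1 := integ_fin h (S := Set.Ioc 0 T) measure_Ioc_lt_top hp
  have i2 := integ_fin h (S := Set.Ioc 0 T) measure_Ioc_lt_top hp2
  have hm := lvl_meas h (4 * r)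
  rw [← integral_inter_add_sdiff hm i1]
  refine add_le_add ?_ ?_
  · calc _ ≤ ∫ s in lvl μ (4 * r), μ s ^ (1 + 1 / r) :=
        setIntegral_mono_set (integ_fin h (vol_lvl h _) hp)
          (ae_of_all _ fun s => Real.rpow_nonneg (h.nn s) _)
          (Set.inter_subset_right).eventuallyLE
      _ ≤ _ := setIntegral_mono_on (integ_fin h (vol_lvl h _) hp) (integ_fin1 h (vol_lvl h _)) hm
          fun s _ => pow_le_self h hr s
  · rw [← integral_const_mul]
    calc _ ≤ ∫ s in Set.Ioc 0 T \ lvl μ (4 * r), Real.exp (-2) * μ s ^ (1 + 1 / (2 * r)) := by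
          refine setIntegral_mono_on (i1.mono_set Set.sdiff_subset)
            ((i2.mono_set Set.sdiff_subset).const_mul _) (measurableSet_Ioc.diff hm) ?_
          rintro s ⟨hs, hn⟩
          have := off_split h hr hs.1 hn
          have e : -(4 * r) / (2 * r) = -2 := by field_simp; norm_num
          rwa [e] at this
      _ ≤ _ := setIntegral_mono_set (i2.const_mul _)
          (ae_of_all _ fun s => mul_nonneg (Real.exp_pos _).le (Real.rpow_nonneg (h.nn s) _))
          (Set.sdiff_subset).eventuallyLE

lemma trunc_bound (h : Std μ K) : ∃ C, 0 < C ∧ ∀ r, 1 ≤ r → ∀ T,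
    (∫ s in Set.Ioc 0 T, μ s ^ (1 + 1 / r)) ≤ C * r := by
  obtain ⟨C, hC, hb⟩ := bet_bound h
  refine ⟨8 * C, by positivity, fun r hr T => ?_⟩
  set I : ℝ → ℝ := fun r => ∫ s in Set.Ioc 0 T, μ s ^ (1 + 1 / r) with hI
  have hIle : ∀ r, 1 ≤ r → I r ≤ ∫ s in Set.Ioc 0 T, μ s := fun r hr =>
    setIntegral_mono_on (integ_fin h measure_Ioc_lt_top (by positivity))
      (integ_fin1 h measure_Ioc_lt_top) measurableSet_Ioc
      fun s _ => pow_le_self h (by linarith) s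
  set M := ∫ s in Set.Ioc 0 T, μ s with hMdef
  have hM0 : 0 ≤ M := setIntegral_nonneg measurableSet_Ioc fun s _ => h.nn s
  have he : Real.exp (-2) ≤ 1 / 4 := by
    have h1 := Real.add_one_le_exp (1:ℝ)
    have h2 : Real.exp 2 = Real.exp 1 * Real.exp 1 := by rw [← Real.exp_add]; norm_num
    rw [Real.exp_neg, inv_eq_one_div]
    apply one_div_le_one_div_of_le (by norm_num)
    nlinarith
  have key : ∀ n : ℕ, ∀ r, 1 ≤ r → I r ≤ 8 * C * r + (1 / 2) ^ n * (M * r) := by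
    intro n
    induction n with
    | zero =>
      intro r hr
      have := hIle r hr
      simp only [pow_zero, one_mul]
      nlinarith [mul_nonneg hC.le (by linarith : (0:ℝ) ≤ r)]
    | succ n ih =>
      intro r hr
      have h1 : I r ≤ bet μ (4 * r) + Real.exp (-2) * I (2 * r) :=
        trunc_rec h (by linarith) T
      have h2 := hb (4 * r) (by linarith)
      have h3 := ih (2 * r) (by linarith)
      have h4 : 0 ≤ I (2 * r) :=
        setIntegral_nonneg measurableSet_Ioc fun s _ => Real.rpow_nonneg (h.nn s) _
      have h5 : Real.exp (-2) * I (2 * r) ≤ 1 / 4 * I (2 * r) := by gcongr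
      rw [pow_succ]
      nlinarith
  have hlim : Tendsto (fun n : ℕ => 8 * C * r + (1 / 2 : ℝ) ^ n * (M * r)) atTop
      (nhds (8 * C * r + 0 * (M * r))) :=
    ((tendsto_pow_atTop_nhds_zero_of_lt_one (by norm_num) (by norm_num)).mul_const _).const_add _
  have := ge_of_tendsto' hlim fun n => key n r hr
  rw [zero_mul, add_zero] at this
  exact this

lemma zeta_bound (h : Std μ K) : ∃ C, 0 < C ∧ ∀ r, 1 ≤ r →
    IntegrableOn (fun s => μ s ^ (1 + 1 / r)) (Set.Ioi 0) ∧
    (∫ s in Set.Ioi 0, μ s ^ (1 + 1 / r)) ≤ C * r := by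
  obtain ⟨C, hC, hb⟩ := trunc_bound h
  refine ⟨C, hC, fun r hr => ?_⟩
  have hp : 0 ≤ 1 + 1 / r := by positivity
  have hi : IntegrableOn (fun s => μ s ^ (1 + 1 / r)) (Set.Ioi 0) := by
    refine integrableOn_Ioi_of_intervalIntegral_norm_bounded (l := atTop) (b := id) (C * r) 0
      (fun T => integ_fin h measure_Ioc_lt_top hp) tendsto_id ?_
    filter_upwards [eventually_ge_atTop 0] with T hT
    rw [id, intervalIntegral.integral_of_le hT]
    simp_rw [Real.norm_eq_abs, fun s => abs_of_nonneg (Real.rpow_nonneg (h.nn s) (1 + 1 / r))]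
    exact hb r hr T
  refine ⟨hi, ?_⟩
  have := intervalIntegral_tendsto_integral_Ioi 0 hi tendsto_id
  refine le_of_tendsto this ?_
  filter_upwards [eventually_ge_atTop 0] with T hT
  rw [id, intervalIntegral.integral_of_le hT]
  exact hb r hr T

lemma zeta_upper (h : Std μ K) {C : ℝ} (hz : ∀ r, 1 ≤ r →
    IntegrableOn (fun s => μ s ^ (1 + 1 / r)) (Set.Ioi 0) ∧
    (∫ s in Set.Ioi 0, μ s ^ (1 + 1 / r)) ≤ C * r) {r w : ℝ} (hr : 1 ≤ r) :
    (∫ s in Set.Ioi 0, μ s ^ (1 + 1 / r)) ≤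
      (∫ s in lvl μ w, μ s ^ (1 + 1 / r)) + Real.exp (-w / (2 * r)) * (C * (2 * r)) := by
  obtain ⟨i1, -⟩ := hz r hr
  obtain ⟨i2, hb⟩ := hz (2 * r) (by linarith)
  have hm := lvl_meas h w
  rw [← integral_inter_add_sdiff hm i1, Set.inter_eq_right.2 (lvl_subIoi w)]
  refine add_le_add le_rfl ?_
  calc _ ≤ ∫ s in Set.Ioi 0 \ lvl μ w, Real.exp (-w / (2 * r)) * μ s ^ (1 + 1 / (2 * r)) := by
          refine setIntegral_mono_on (i1.mono_set Set.sdiff_subset)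
            ((i2.mono_set Set.sdiff_subset).const_mul _) (measurableSet_Ioi.diff hm) ?_
          rintro s ⟨hs, hn⟩
          exact off_split h (by linarith) hs hn
      _ ≤ ∫ s in Set.Ioi 0, Real.exp (-w / (2 * r)) * μ s ^ (1 + 1 / (2 * r)) :=
          setIntegral_mono_set (i2.const_mul _)
          (ae_of_all _ fun s => mul_nonneg (Real.exp_pos _).le (Real.rpow_nonneg (h.nn s) _))
          (Set.sdiff_subset).eventuallyLE
      _ ≤ _ := by rw [integral_const_mul]; gcongr

lemma zeta_sandwich (h : Std μ K) {C : ℝ} (hz : ∀ r, 1 ≤ r →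
    IntegrableOn (fun s => μ s ^ (1 + 1 / r)) (Set.Ioi 0) ∧
    (∫ s in Set.Ioi 0, μ s ^ (1 + 1 / r)) ≤ C * r) {δ : ℝ} (hδ : 0 < δ) (n : ℕ) {t : ℝ}
    (ht : Real.exp 1 < t) :
    (∑ k ∈ Finset.range n, Real.exp (-((k + 1 : ℕ) * δ)) *
        (bFn μ ((k + 1 : ℕ) * δ) t - bFn μ (k * δ) t)) ≤ zetaFn μ t ∧
    zetaFn μ t ≤ (∑ k ∈ Finset.range n, Real.exp (-(k * δ)) *
        (bFn μ ((k + 1 : ℕ) * δ) t - bFn μ (k * δ) t)) + 2 * C * Real.exp (-(n * δ) / 2) := by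
  have ht0 : 0 < t := (Real.exp_pos 1).trans ht
  have hr : 1 < Real.log t := by rwa [Real.lt_log_iff_exp_lt ht0]
  simp only [bFn, zetaFn, if_pos ht]
  set r := Real.log t with hrdef
  have hr0 : 0 < r := by linarith
  set Z : ℕ → ℝ := fun k => ∫ s in lvl μ (k * δ * r), μ s ^ (1 + 1 / r) with hZ
  have hZ0 : Z 0 = 0 := by simp [hZ, lvl_zero h]
  have tel : ∑ k ∈ Finset.range n, (Z (k + 1) - Z k) = Z n := by
    rw [Finset.sum_range_sub, hZ0, sub_zero]
  have sl := fun k : ℕ => slice h (u := k * δ * r) (w := (k + 1 : ℕ) * δ * r) (r := r)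
    (by push_cast; nlinarith [mul_pos hδ hr0]) hr0
  have ex : ∀ x : ℝ, -(x * δ * r) / r = -(x * δ) := fun x => by field_simp
  constructor
  · rw [le_div_iff₀ hr0, Finset.sum_mul]
    calc _ ≤ ∑ k ∈ Finset.range n, (Z (k + 1) - Z k) := by
          refine Finset.sum_le_sum fun k _ => ?_
          have := (sl k).1
          rw [ex] at this
          refine le_trans (le_of_eq ?_) this
          field_simp
      _ = Z n := tel
      _ ≤ _ := setIntegral_mono_set (hz r hr.le).1
          (ae_of_all _ fun s => Real.rpow_nonneg (h.nn s) _) (lvl_subIoi _).eventuallyLE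
  · rw [div_le_iff₀ hr0, add_mul, Finset.sum_mul]
    have hu := zeta_upper h hz (r := r) (w := n * δ * r) hr.le
    have e2 : -(n * δ * r) / (2 * r) = -(n * δ) / 2 := by field_simp
    rw [e2] at hu
    have : Z n ≤ ∑ k ∈ Finset.range n, Real.exp (-(k * δ)) *
        (bet μ ((k + 1 : ℕ) * δ * r) / r - bet μ (k * δ * r) / r) * r := by
      rw [← tel]
      refine Finset.sum_le_sum fun k _ => ?_
      have := (sl k).2
      rw [ex] at this
      refine le_trans this (le_of_eq ?_)
      field_simp
    calc _ ≤ _ := hu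
      _ ≤ _ := add_le_add this (le_of_eq (by ring))

/-- what we use of the functional -/
structure Om (ω : (ℝ → ℝ) →ₗ[ℝ] ℝ) : Prop where
  sand : ∀ f : ℝ → ℝ, Measurable f → BddFun f →
      liminf f (atTop ⊓ ae ((volume : Measure ℝ).restrict (Set.Ioi 0))) ≤ ω f ∧
        ω f ≤ limsup f (atTop ⊓ ae ((volume : Measure ℝ).restrict (Set.Ioi 0)))
  pow : ∀ f : ℝ → ℝ, Measurable f → BddFun f →
      ∀ a : ℝ, 0 < a → ω (fun t => f (t ^ a)) = ω f

/-- measurable and bounded -/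
def Good (f : ℝ → ℝ) : Prop := Measurable f ∧ BddFun f

lemma Good.add {f g : ℝ → ℝ} (hf : Good f) (hg : Good g) : Good (f + g) := by
  obtain ⟨hf, A, hA⟩ := hf
  obtain ⟨hg, B, hB⟩ := hg
  exact ⟨hf.add hg, A + B, fun x => (abs_add_le _ _).trans (add_le_add (hA x) (hB x))⟩

lemma Good.smul {f : ℝ → ℝ} (hf : Good f) (c : ℝ) : Good (c • f) := by
  obtain ⟨hf, A, hA⟩ := hf
  refine ⟨hf.const_smul c, |c| * A, fun x => ?_⟩
  rw [Pi.smul_apply, smul_eq_mul, abs_mul]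
  exact mul_le_mul_of_nonneg_left (hA x) (abs_nonneg c)

lemma Good.sub {f g : ℝ → ℝ} (hf : Good f) (hg : Good g) : Good (f - g) := by
  have := hf.add (hg.smul (-1))
  rwa [neg_one_smul, ← sub_eq_add_neg] at this

lemma Good.const (c : ℝ) : Good (fun _ => c) := ⟨measurable_const, |c|, fun _ => le_rfl⟩

lemma Good.sum {f : ℕ → ℝ → ℝ} (hf : ∀ k, Good (f k)) (n : ℕ) :
    Good (∑ k ∈ Finset.range n, f k) := by
  induction n with
  | zero => exact Good.const 0
  | succ n ih => rw [Finset.sum_range_succ]; exact ih.add (hf n)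

lemma Good.pow {f : ℝ → ℝ} (hf : Good f) (a : ℝ) : Good (fun t => f (t ^ a)) := by
  obtain ⟨hf, A, hA⟩ := hf
  exact ⟨hf.comp (measurable_id.pow_const a), A, fun x => hA _⟩

lemma filt_neBot : (atTop ⊓ ae ((volume : Measure ℝ).restrict (Set.Ioi 0))).NeBot := by
  rw [inf_neBot_iff]
  intro s hs s' hs'
  obtain ⟨a, ha⟩ := mem_atTop_sets.1 hs
  by_contra hne
  rw [Set.not_nonempty_iff_eq_empty] at hne
  rw [mem_ae_iff] at hs'
  have hsub : Set.Ioi (max a 0) ⊆ s'ᶜ ∩ Set.Ioi 0 := by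
    intro x hx
    have hx' : max a 0 < x := hx
    refine ⟨fun h' => ?_, (le_max_right a 0).trans_lt hx'⟩
    have : x ∈ s ∩ s' := ⟨ha x ((le_max_left a 0).trans hx'.le), h'⟩
    rw [hne] at this
    exact this
  have h1 : volume (s'ᶜ ∩ Set.Ioi (0:ℝ)) = 0 := by
    have := Measure.le_restrict_apply (μ := (volume : Measure ℝ)) (Set.Ioi 0) s'ᶜ
    rw [hs'] at this
    exact le_antisymm this zero_le
  have h2 := measure_mono_null hsub h1
  simp at h2

variable {ω : (ℝ → ℝ) →ₗ[ℝ] ℝ}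

lemma Om.le_const (hω : Om ω) {f : ℝ → ℝ} (hf : Good f) {c : ℝ} (h : ∀ᶠ t in atTop, f t ≤ c) :
    ω f ≤ c := by
  have := filt_neBot
  refine ((hω.sand f hf.1 hf.2).2).trans ?_
  obtain ⟨A, hA⟩ := hf.2
  refine limsup_le_of_le ?_ (h.filter_mono inf_le_left)
  exact IsBoundedUnder.isCoboundedUnder_le
    ⟨-A, eventually_map.2 (Eventually.of_forall fun t => (abs_le.1 (hA t)).1)⟩

lemma Om.mono (hω : Om ω) {f g : ℝ → ℝ} (hf : Good f) (hg : Good g)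
    (h : ∀ᶠ t in atTop, f t ≤ g t) : ω f ≤ ω g := by
  have := hω.le_const (hf.sub hg) (c := 0) (h.mono fun t ht => by simpa using ht)
  rw [map_sub] at this
  linarith

lemma Om.congr (hω : Om ω) {f g : ℝ → ℝ} (hf : Good f) (hg : Good g)
    (h : ∀ᶠ t in atTop, f t = g t) : ω f = ω g :=
  le_antisymm (hω.mono hf hg (h.mono fun _ h => h.le)) (hω.mono hg hf (h.mono fun _ h => h.ge))

lemma gFn_good (h : Std μ K) : Good (gFn μ) := by
  constructor
  · refine Measurable.ite measurableSet_Ioi ?_ measurable_const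
    refine Measurable.div ?_ (Real.measurable_log.comp (measurable_const.add measurable_id))
    exact (intervalIntegral.continuous_primitive
      (fun a b => h.anti.intervalIntegrable) 0).measurable
  · refine ⟨K, fun t => ?_⟩
    have hK := h.Kpos
    unfold gFn
    split_ifs with ht
    · have hl : 0 < Real.log (1 + t) := Real.log_pos (by linarith)
      have h0 : 0 ≤ ∫ s in (0:ℝ)..t, μ s :=
        intervalIntegral.integral_nonneg ht.le fun s _ => h.nn s
      rw [abs_of_nonneg (by positivity), div_le_iff₀ hl]
      exact h.hint t ht
    · simpa using hK.le

lemma gFn_nn (h : Std μ K) (t : ℝ) : 0 ≤ gFn μ t := by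
  unfold gFn
  split_ifs with ht
  · have hl : 0 < Real.log (1 + t) := Real.log_pos (by linarith)
    have h0 : 0 ≤ ∫ s in (0:ℝ)..t, μ s :=
      intervalIntegral.integral_nonneg ht.le fun s _ => h.nn s
    positivity
  · exact le_rfl

lemma log_big {t : ℝ} (ht : Real.exp 1 < t) : 1 < Real.log t := by
  rwa [Real.lt_log_iff_exp_lt ((Real.exp_pos 1).trans ht)]

lemma zetaFn_good (h : Std μ K) : Good (zetaFn μ) := by
  constructor
  · refine Measurable.ite measurableSet_Ioi ?_ measurable_const
    refine Measurable.div ?_ Real.measurable_log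
    have hj : Measurable (Function.uncurry fun t s : ℝ => μ s ^ (1 + 1 / Real.log t)) := by
      have hm := h.anti.measurable
      unfold Function.uncurry
      exact (hm.comp measurable_snd).pow (measurable_const.add
        (measurable_const.div (Real.measurable_log.comp measurable_fst)))
    exact (hj.stronglyMeasurable.integral_prod_right
      (ν := (volume : Measure ℝ).restrict (Set.Ioi 0))).measurable
  · obtain ⟨C, hC, hz⟩ := zeta_bound h
    refine ⟨C, fun t => ?_⟩
    unfold zetaFn
    split_ifs with ht
    · have hl := log_big ht
      have h0 : 0 ≤ ∫ s in Set.Ioi 0, μ s ^ (1 + 1 / Real.log t) :=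
        setIntegral_nonneg measurableSet_Ioi fun s _ => Real.rpow_nonneg (h.nn s) _
      rw [abs_of_nonneg (by positivity), div_le_iff₀ (by linarith)]
      exact (hz _ hl.le).2
    · simpa using hC.le

lemma bFn_nn (h : Std μ K) (v t : ℝ) : 0 ≤ bFn μ v t := by
  unfold bFn
  split_ifs with ht
  · have hl := log_big ht
    exact div_nonneg (bet_nn h _) (by linarith)
  · exact le_rfl

lemma bFn_good (h : Std μ K) (v : ℝ) : Good (bFn μ v) := by
  constructor
  · refine Measurable.ite measurableSet_Ioi ?_ measurable_const
    refine Measurable.div ?_ Real.measurable_log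
    exact (bet_mono h).measurable.comp (measurable_const.mul Real.measurable_log)
  · obtain ⟨C, hC, hb⟩ := bet_bound h
    refine ⟨C * max v 1, fun t => ?_⟩
    rw [abs_of_nonneg (bFn_nn h v t)]
    unfold bFn
    have hm : 1 ≤ max v 1 := le_max_right _ _
    split_ifs with ht
    · have hl := log_big ht
      rw [div_le_iff₀ (by linarith)]
      calc bet μ (v * Real.log t) ≤ bet μ (max v 1 * Real.log t) := by
            apply bet_mono h
            exact mul_le_mul_of_nonneg_right (le_max_left _ _) (by linarith)
        _ ≤ C * (max v 1 * Real.log t) := hb _ (by nlinarith)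
        _ = _ := by ring
    · positivity

lemma bFn_scale (h : Std μ K) (hω : Om ω) {v : ℝ} (hv : 0 ≤ v) :
    ω (bFn μ v) = v * ω (bFn μ 1) := by
  rcases hv.eq_or_lt with rfl | hv
  · have : bFn μ 0 = 0 := by
      funext t
      simp [bFn, bet_zero h]
    rw [this, map_zero, zero_mul]
  · have h1 := hω.pow (bFn μ 1) (bFn_good h 1).1 (bFn_good h 1).2 v hv
    rw [← h1, ← smul_eq_mul, ← map_smul]
    refine hω.congr (bFn_good h v) (((bFn_good h 1).pow v).smul v) ?_
    filter_upwards [eventually_gt_atTop (Real.exp 1),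
      (tendsto_rpow_atTop hv).eventually_gt_atTop (Real.exp 1)] with t h2 h3
    have hl := log_big h2
    simp only [Pi.smul_apply, smul_eq_mul, bFn, if_pos h2, if_pos h3, one_mul]
    rw [Real.log_rpow ((Real.exp_pos 1).trans h2)]
    field_simp

lemma g_le_b (h : Std μ K) (hω : Om ω) : ω (gFn μ) ≤ ω (bFn μ 1) := by
  have key : ∀ ε : ℝ, 0 < ε → ω (gFn μ) - ω (bFn μ 1) ≤ ε := by
    intro ε hε
    rw [← map_sub]
    refine hω.le_const ((gFn_good h).sub (bFn_good h 1)) ?_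
    filter_upwards [eventually_gt_atTop (Real.exp 1),
      Real.tendsto_log_atTop.eventually_ge_atTop (1 / ε)] with t h2 h3
    have hl := log_big h2
    have ht : 0 < t := (Real.exp_pos 1).trans h2
    simp only [Pi.sub_apply, bFn, gFn, if_pos h2, if_pos ht, one_mul]
    have hA : (∫ s in (0:ℝ)..t, μ s) ≤ bet μ (Real.log t) + 1 := by
      rw [intervalIntegral.integral_of_le ht.le]
      have i1 := integ_fin1 h (S := Set.Ioc 0 t) measure_Ioc_lt_top
      have hm := lvl_meas h (Real.log t)
      rw [← integral_inter_add_sdiff hm i1]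
      refine add_le_add (setIntegral_mono_set (integ_fin1 h (vol_lvl h _)) (ae_of_all _ h.nn)
          (Set.inter_subset_right).eventuallyLE) ?_
      have ic : IntegrableOn (fun _ : ℝ => 1 / t) (Set.Ioc 0 t) := by simp
      calc _ ≤ ∫ s in Set.Ioc 0 t \ lvl μ (Real.log t), 1 / t := by
            refine setIntegral_mono_on (i1.mono_set Set.sdiff_subset)
              (ic.mono_set Set.sdiff_subset) (measurableSet_Ioc.diff hm) ?_
            rintro s ⟨hs, hn⟩
            have := off_lvl hs.1 hn
            rwa [Real.exp_neg, Real.exp_log ht, inv_eq_one_div] at this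
        _ ≤ ∫ s in Set.Ioc 0 t, 1 / t := setIntegral_mono_set ic
            (ae_of_all _ fun s => by simp [ht.le]) (Set.sdiff_subset).eventuallyLE
        _ = 1 := by
            rw [← intervalIntegral.integral_of_le ht.le]
            simp [ht.ne']
    have h0 : 0 ≤ ∫ s in (0:ℝ)..t, μ s :=
      intervalIntegral.integral_nonneg ht.le fun s _ => h.nn s
    have hlog : Real.log t ≤ Real.log (1 + t) := Real.log_le_log ht (by linarith)
    have h4 : (∫ s in (0:ℝ)..t, μ s) / Real.log (1 + t) ≤ (∫ s in (0:ℝ)..t, μ s) / Real.log t :=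
      div_le_div_of_nonneg_left h0 (by linarith) hlog
    have h5 : (∫ s in (0:ℝ)..t, μ s) / Real.log t ≤ (bet μ (Real.log t) + 1) / Real.log t := by
      gcongr
    have h6 : 1 / Real.log t ≤ ε := by
      rw [div_le_iff₀ (by linarith)]
      rw [div_le_iff₀ hε] at h3
      linarith
    rw [add_div] at h5
    linarith
  have := le_of_forall_pos_le_add (a := ω (gFn μ) - ω (bFn μ 1)) (b := 0)
    (fun ε hε => by simpa using key ε hε)
  linarith

lemma b_le_g (h : Std μ K) (hω : Om ω) : ω (bFn μ 1) ≤ ω (gFn μ) := by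
  have key : ∀ a : ℝ, 1 < a → ω (bFn μ 1) ≤ (2 * a - 1) * ω (gFn μ) := by
    intro a ha
    have h1 := hω.pow (gFn μ) (gFn_good h).1 (gFn_good h).2 a (by linarith)
    rw [← h1, ← smul_eq_mul, ← map_smul]
    refine hω.mono (bFn_good h 1) (((gFn_good h).pow a).smul _) ?_
    obtain ⟨w0, hw⟩ := size_lvl h ha
    filter_upwards [eventually_gt_atTop (Real.exp 1),
      Real.tendsto_log_atTop.eventually_ge_atTop w0,
      Real.tendsto_log_atTop.eventually_ge_atTop (Real.log 2 / (a - 1))] with t h2 h3 h4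
    have hl := log_big h2
    have ht : 0 < t := (Real.exp_pos 1).trans h2
    have hta : 0 < t ^ a := Real.rpow_pos_of_pos ht a
    have ht1 : 1 ≤ t := by
      have := Real.add_one_le_exp 1
      linarith
    simp only [Pi.smul_apply, smul_eq_mul, bFn, gFn, if_pos h2, if_pos hta, one_mul]
    have e : Real.exp (a * Real.log t) = t ^ a := by
      rw [Real.rpow_def_of_pos ht, mul_comm]
    have h5 := bet_le_int h hta.le (by rw [← e]; exact hw _ h3)
    have h0 : 0 ≤ ∫ s in (0:ℝ)..t ^ a, μ s :=
      intervalIntegral.integral_nonneg hta.le fun s _ => h.nn s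
    have h6 : Real.log (1 + t ^ a) ≤ (2 * a - 1) * Real.log t := by
      have h7 : 1 ≤ t ^ a := Real.one_le_rpow ht1 (by linarith)
      have h8 : Real.log (1 + t ^ a) ≤ Real.log (2 * t ^ a) :=
        Real.log_le_log (by linarith) (by linarith)
      rw [Real.log_mul (by norm_num) hta.ne', Real.log_rpow ht] at h8
      rw [div_le_iff₀ (by linarith)] at h4
      linarith
    have h9 : 0 < Real.log (1 + t ^ a) := Real.log_pos (by linarith)
    rw [div_le_iff₀ (by linarith)]
    refine h5.trans ?_
    set I := ∫ s in (0:ℝ)..t ^ a, μ s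
    calc I = I / Real.log (1 + t ^ a) * Real.log (1 + t ^ a) := by field_simp
      _ ≤ I / Real.log (1 + t ^ a) * ((2 * a - 1) * Real.log t) := by gcongr
      _ = _ := by ring
  have hlim : Tendsto (fun a : ℝ => (2 * a - 1) * ω (gFn μ)) (nhdsWithin 1 (Set.Ioi 1))
      (nhds ((2 * 1 - 1) * ω (gFn μ))) :=
    Tendsto.mono_left (Continuous.tendsto (by fun_prop) 1) nhdsWithin_le_nhds
  have := ge_of_tendsto hlim (eventually_mem_nhdsWithin.mono fun a ha => key a ha)
  linarith

lemma zeta_eq_b (h : Std μ K) (hω : Om ω) : ω (zetaFn μ) = ω (bFn μ 1) := by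
  obtain ⟨C, hC, hz⟩ := zeta_bound h
  set L := ω (bFn μ 1) with hL
  have hL0 : 0 ≤ L := by
    have := hω.mono (Good.const 0) (bFn_good h 1) (Eventually.of_forall fun t => bFn_nn h 1 t)
    have h0 : ω (fun _ => (0:ℝ)) = 0 := map_zero ω
    linarith
  have hsum : ∀ (δ : ℝ), 0 < δ → ∀ (c : ℕ → ℝ) (n : ℕ),
      Good (∑ k ∈ Finset.range n, c k • (bFn μ ((k + 1 : ℕ) * δ) - bFn μ (k * δ))) ∧
      ω (∑ k ∈ Finset.range n, c k • (bFn μ ((k + 1 : ℕ) * δ) - bFn μ (k * δ))) =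
        (∑ k ∈ Finset.range n, c k) * δ * L := by
    intro δ hδ c n
    refine ⟨Good.sum (fun k => ((bFn_good h _).sub (bFn_good h _)).smul _) n, ?_⟩
    rw [map_sum, Finset.sum_mul, Finset.sum_mul]
    refine Finset.sum_congr rfl fun k _ => ?_
    rw [map_smul, map_sub, bFn_scale h hω (v := (k + 1 : ℕ) * δ) (by positivity),
      bFn_scale h hω (v := k * δ) (by positivity), smul_eq_mul, ← hL]
    push_cast
    ring
  have geo : ∀ δ : ℝ, 0 < δ → ∀ n : ℕ,
      ∑ k ∈ Finset.range n, Real.exp (-(k * δ)) =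
        (1 - Real.exp (-(n * δ))) / (1 - Real.exp (-δ)) := by
    intro δ hδ n
    have hne : Real.exp (-δ) < 1 := by rw [Real.exp_lt_one_iff]; linarith
    have e : ∀ k : ℕ, Real.exp (-(k * δ)) = Real.exp (-δ) ^ k := fun k => by
      rw [← Real.exp_nat_mul]; ring_nf
    simp_rw [e]
    rw [geom_sum_eq hne.ne, ← neg_div_neg_eq]
    ring_nf
  have elim : ∀ c : ℝ, 0 < c → Tendsto (fun n : ℕ => Real.exp (-(n * c))) atTop (nhds 0) := by
    intro c hc
    refine Real.tendsto_exp_neg_atTop_nhds_zero.comp ?_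
    exact tendsto_natCast_atTop_atTop.atTop_mul_const hc
  have up : ∀ δ : ℝ, 0 < δ → ω (zetaFn μ) ≤ Real.exp δ * L := by
    intro δ hδ
    have hpos : 0 < 1 - Real.exp (-δ) := by
      have : Real.exp (-δ) < 1 := by rw [Real.exp_lt_one_iff]; linarith
      linarith
    have step : ∀ n : ℕ, ω (zetaFn μ) ≤
        (1 - Real.exp (-(n * δ))) / (1 - Real.exp (-δ)) * δ * L +
          2 * C * Real.exp (-(n * (δ / 2))) := by
      intro n
      obtain ⟨g1, g2⟩ := hsum δ hδ (fun k => Real.exp (-(k * δ))) n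
      rw [← geo δ hδ, ← g2, ← sub_le_iff_le_add', ← map_sub]
      refine hω.le_const ((zetaFn_good h).sub g1) ?_
      filter_upwards [eventually_gt_atTop (Real.exp 1)] with t ht
      have := (zeta_sandwich h hz hδ n ht).2
      simp only [Pi.sub_apply, Finset.sum_apply, Pi.smul_apply, smul_eq_mul]
      have e : -(n * (δ / 2)) = -(n * δ) / 2 := by ring
      rw [e]
      linarith
    have hlim : Tendsto (fun n : ℕ => (1 - Real.exp (-(n * δ))) / (1 - Real.exp (-δ)) * δ * L +
          2 * C * Real.exp (-(n * (δ / 2)))) atTop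
        (nhds ((1 - 0) / (1 - Real.exp (-δ)) * δ * L + 2 * C * 0)) :=
      (((((elim δ hδ).const_sub 1).div_const _).mul_const δ).mul_const L).add
        ((elim (δ / 2) (by positivity)).const_mul _)
    refine (ge_of_tendsto' hlim step).trans ?_
    rw [mul_zero, add_zero, sub_zero]
    refine mul_le_mul_of_nonneg_right ?_ hL0
    rw [one_div_mul_eq_div, div_le_iff₀ hpos, mul_sub, ← Real.exp_add]
    have := Real.add_one_le_exp δ
    simp only [add_neg_cancel, Real.exp_zero, mul_one]
    linarith
  have lo : ∀ δ : ℝ, 0 < δ → Real.exp (-δ) * L ≤ ω (zetaFn μ) := by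
    intro δ hδ
    have hpos : 0 < 1 - Real.exp (-δ) := by
      have : Real.exp (-δ) < 1 := by rw [Real.exp_lt_one_iff]; linarith
      linarith
    have step : ∀ n : ℕ, 
        Real.exp (-δ) * ((1 - Real.exp (-(n * δ))) / (1 - Real.exp (-δ))) * δ * L ≤
          ω (zetaFn μ) := by
      intro n
      obtain ⟨g1, g2⟩ := hsum δ hδ (fun k => Real.exp (-((k + 1 : ℕ) * δ))) n
      have e : Real.exp (-δ) * ∑ k ∈ Finset.range n, Real.exp (-(k * δ)) =
          ∑ k ∈ Finset.range n, Real.exp (-((k + 1 : ℕ) * δ)) := by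
        rw [Finset.mul_sum]
        refine Finset.sum_congr rfl fun k _ => ?_
        rw [← Real.exp_add]
        push_cast
        ring_nf
      rw [← geo δ hδ, e, ← g2]
      refine hω.mono g1 (zetaFn_good h) ?_
      filter_upwards [eventually_gt_atTop (Real.exp 1)] with t ht
      have := (zeta_sandwich h hz hδ n ht).1
      simp only [Pi.sub_apply, Finset.sum_apply, Pi.smul_apply, smul_eq_mul]
      exact this
    have hlim : Tendsto (fun n : ℕ =>
        Real.exp (-δ) * ((1 - Real.exp (-(n * δ))) / (1 - Real.exp (-δ))) * δ * L) atTop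
        (nhds (Real.exp (-δ) * ((1 - 0) / (1 - Real.exp (-δ))) * δ * L)) :=
      (((((elim δ hδ).const_sub 1).div_const _).const_mul _).mul_const δ).mul_const L
    refine le_trans ?_ (le_of_tendsto' hlim step)
    refine mul_le_mul_of_nonneg_right ?_ hL0
    rw [sub_zero, mul_assoc]
    refine le_mul_of_one_le_right (Real.exp_pos _).le ?_
    rw [one_div_mul_eq_div, le_div_iff₀ hpos]
    have := Real.add_one_le_exp (-δ)
    linarith
  refine le_antisymm ?_ ?_
  · have hlim : Tendsto (fun δ : ℝ => Real.exp δ * L) (nhdsWithin 0 (Set.Ioi 0))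
        (nhds (Real.exp 0 * L)) :=
      Tendsto.mono_left (Continuous.tendsto (by fun_prop) 0) nhdsWithin_le_nhds
    have := ge_of_tendsto hlim (eventually_mem_nhdsWithin.mono fun a ha => up a ha)
    simpa using this
  · have hlim : Tendsto (fun δ : ℝ => Real.exp (-δ) * L) (nhdsWithin 0 (Set.Ioi 0))
        (nhds (Real.exp (-0) * L)) :=
      Tendsto.mono_left (Continuous.tendsto (by fun_prop) 0) nhdsWithin_le_nhds
    have := le_of_tendsto hlim (eventually_mem_nhdsWithin.mono fun a ha => lo a ha)
    simpa using this

end aux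

/-- **The Dixmier trace as a residue of the zeta function (Theorem 10.6).**
Let `μ : [0,∞) → [0,1]` be nonincreasing with `∫₀^t μ ≤ K log(1+t)` (the singular value
function of a positive `T ∈ L^{(1,∞)}`, `‖T‖ ≤ 1`), and let `ω` be a positive linear
functional on `L∞((0,∞))` lying between the essential liminf and limsup at `+∞` which is
invariant under all dilations `D_c`, all power maps `P^a` and the logarithmic Cesàro
operator `M`.  Then `g(t) = (1/log(1+t))∫₀^t μ` and `F(t) = (1/log t)∫₀^∞ μ^{1+1/log t}`
are bounded and `ω(g) = ω(F)`. -/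
theorem dixmier_trace_eq_zeta_residue (μ : ℝ → ℝ)
    (hμ0 : ∀ s : ℝ, 0 ≤ s → 0 ≤ μ s) (hμ1 : ∀ s : ℝ, 0 ≤ s → μ s ≤ 1)
    (hmono : AntitoneOn μ (Set.Ici 0)) (K : ℝ) (hK : 0 < K)
    (hint : ∀ t : ℝ, 0 < t → (∫ s in (0:ℝ)..t, μ s) ≤ K * Real.log (1 + t))
    (ω : (ℝ → ℝ) →ₗ[ℝ] ℝ)
    -- ω is positive
    (hpos : ∀ f : ℝ → ℝ, Measurable f → BddFun f →
      (∀ᵐ x ∂((volume : Measure ℝ).restrict (Set.Ioi 0)), 0 ≤ f x) → 0 ≤ ω f)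
    -- ω lies between the essential liminf and limsup at +∞
    (hsandwich : ∀ f : ℝ → ℝ, Measurable f → BddFun f →
      liminf f (atTop ⊓ ae ((volume : Measure ℝ).restrict (Set.Ioi 0))) ≤ ω f ∧
        ω f ≤ limsup f (atTop ⊓ ae ((volume : Measure ℝ).restrict (Set.Ioi 0))))
    -- ω is dilation invariant: ω ∘ D_c = ω for all c > 0
    (hdil : ∀ f : ℝ → ℝ, Measurable f → BddFun f →
      ∀ c : ℝ, 0 < c → ω (fun t => f (t / c)) = ω f)
    -- ω is power invariant: ω ∘ P^a = ω for all a > 0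
    (hpow : ∀ f : ℝ → ℝ, Measurable f → BddFun f →
      ∀ a : ℝ, 0 < a → ω (fun t => f (t ^ a)) = ω f)
    -- ω is M-invariant
    (hM : ∀ f : ℝ → ℝ, Measurable f → BddFun f → ω (Mop f) = ω f) :
    BddFun (gFn μ) ∧ BddFun (zetaFn μ) ∧ ω (gFn μ) = ω (zetaFn μ) := by
  set ν : ℝ → ℝ := fun s => μ (max s 0) with hν
  have hνe : ∀ s, 0 ≤ s → ν s = μ s := fun s hs => by simp [hν, max_eq_left hs]
  have eI : ∀ t, 0 < t → (∫ s in (0:ℝ)..t, ν s) = ∫ s in (0:ℝ)..t, μ s := by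
    intro t ht
    refine intervalIntegral.integral_congr fun s hs => ?_
    rw [Set.uIcc_of_le ht.le] at hs
    exact hνe s hs.1
  have eg : gFn μ = gFn ν := by
    funext t
    unfold gFn
    split_ifs with ht
    · rw [eI t ht]
    · rfl
  have ez : zetaFn μ = zetaFn ν := by
    funext t
    unfold zetaFn
    split_ifs with ht
    · congr 1
      refine setIntegral_congr_fun measurableSet_Ioi fun s hs => ?_
      simp only [hνe s (le_of_lt hs)]
    · rfl
  have hS : Std ν K :=
    { nn := fun s => hμ0 _ (le_max_right _ _)
      le1 := fun s => hμ1 _ (le_max_right _ _)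
      anti := fun s t hst => hmono (le_max_right s 0) (le_max_right t 0)
        (max_le_max hst le_rfl)
      Kpos := hK
      hint := fun t ht => by rw [eI t ht]; exact hint t ht }
  have hω : Om ω := ⟨hsandwich, hpow⟩
  rw [eg, ez]
  refine ⟨(gFn_good hS).2, (zetaFn_good hS).2, ?_⟩
  rw [zeta_eq_b hS hω]
  exact le_antisymm (g_le_b hS hω) (b_le_g hS hω)
end

section
/- Let p > 1 be real, K > 0, and let μ : [0,∞) → [0,1] be nonincreasing with μ(s) ≤ K(1+s)^{−1/p} for all s ≥ 0. Let ω be a linear functional on L∞((0,∞)) which is positive (ω(f) ≥ 0 whenever f ≥ 0 a.e.), satisfies ess liminf_{t → +∞} f(t) ≤ ω(f) ≤ ess limsup_{t → +∞} f(t) for every real-valued f ∈ L∞((0,∞)), and satisfies ω ∘ D_c = ω, ω ∘ P^a = ω and ω ∘ M = ω for all c > 0 and a > 0. Define Z(t) = (1/log t)∫₀^∞ μ(s)^{p + 1/log t} ds for t > e, Z(t) = 0 for 0 < t ≤ e, and g_p(t) = (1/log(1+t))∫₀^t μ(s)^p ds for t > 0. Then Z and g_p are bounded and ω(Z) = p·ω(g_p).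 (This relates the residues (1/r)∫₀^∞ μ^{p+1/r} of the zeta function of T, where μ is the singular value function of the positive operator T ∈ L^{(p,∞)}, to p times the Dixmier trace of T^p, via the substitution r = log t.) -/
open Filter MeasureTheory

/-- `Z(t) = (1/log t)∫₀^∞ μ(s)^{p + 1/log t} ds` for `t > e` (and `0` for `t ≤ e`). -/
noncomputable def zetaPFn (p : ℝ) (μ : ℝ → ℝ) : ℝ → ℝ := fun t =>
  if Real.exp 1 < t then
    (∫ s in Set.Ioi (0:ℝ), μ s ^ (p + 1 / Real.log t)) / Real.log t
  else 0

/-- `g_p(t) = (1/log(1+t)) ∫₀^t μ(s)^p ds` for `t > 0` (and `0` for `t ≤ 0`). -/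
noncomputable def gPFn (p : ℝ) (μ : ℝ → ℝ) : ℝ → ℝ := fun t =>
  if 0 < t then (∫ s in (0:ℝ)..t, μ s ^ p) / Real.log (1 + t) else 0


namespace ZR
open Set

section omega
variable {ω : (ℝ → ℝ) →ₗ[ℝ] ℝ}

lemma neBot_filter : (atTop ⊓ ae ((volume : Measure ℝ).restrict (Set.Ioi 0))).NeBot := by
  rw [Filter.inf_neBot_iff]
  intro s hs t ht
  obtain ⟨a, ha⟩ := mem_atTop_sets.1 hs
  by_contra hne
  rw [Set.not_nonempty_iff_eq_empty] at hne
  have h1 : (volume : Measure ℝ).restrict (Set.Ioi 0) tᶜ = 0 := mem_ae_iff.1 ht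
  have h2 : Set.Ioi (max a 0) ⊆ tᶜ := by
    intro x hx hxt
    have : x ∈ s ∩ t := ⟨ha x ((le_max_left a 0).trans (le_of_lt hx)), hxt⟩
    rw [hne] at this
    exact this
  have h3 := measure_mono_null h2 h1
  rw [Measure.restrict_apply measurableSet_Ioi] at h3
  have h4 : Set.Ioi (max a 0) ∩ Set.Ioi 0 = Set.Ioi (max a 0) := by
    apply Set.inter_eq_left.2
    intro x hx
    exact lt_of_le_of_lt (le_max_right a 0) hx
  rw [h4] at h3
  simp at h3

lemma omega_zero
    (hsandwich : ∀ f : ℝ → ℝ, Measurable f → BddFun f →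
      liminf f (atTop ⊓ ae ((volume : Measure ℝ).restrict (Set.Ioi 0))) ≤ ω f ∧
        ω f ≤ limsup f (atTop ⊓ ae ((volume : Measure ℝ).restrict (Set.Ioi 0))))
    (f : ℝ → ℝ) (hf : Measurable f) (hb : BddFun f) (h : Tendsto f atTop (nhds 0)) :
    ω f = 0 := by
  have := neBot_filter
  have h' : Tendsto f (atTop ⊓ ae ((volume : Measure ℝ).restrict (Set.Ioi 0))) (nhds 0) :=
    h.mono_left inf_le_left
  have := hsandwich f hf hb
  rw [h'.liminf_eq, h'.limsup_eq] at this
  linarith [this.1, this.2]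

lemma bdd_sub {f g : ℝ → ℝ} (hf : BddFun f) (hg : BddFun g) : BddFun (f - g) := by
  obtain ⟨C, hC⟩ := hf
  obtain ⟨D, hD⟩ := hg
  exact ⟨C + D, fun x => (abs_sub _ _).trans (add_le_add (hC x) (hD x))⟩

lemma bdd_mul {f : ℝ → ℝ} (hf : BddFun f) (c : ℝ) : BddFun (c • f) := by
  obtain ⟨C, hC⟩ := hf
  refine ⟨|c| * C, fun x => ?_⟩
  simp only [Pi.smul_apply, smul_eq_mul, abs_mul]
  exact mul_le_mul_of_nonneg_left (hC x) (abs_nonneg c)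

lemma omega_congr
    (hsandwich : ∀ f : ℝ → ℝ, Measurable f → BddFun f →
      liminf f (atTop ⊓ ae ((volume : Measure ℝ).restrict (Set.Ioi 0))) ≤ ω f ∧
        ω f ≤ limsup f (atTop ⊓ ae ((volume : Measure ℝ).restrict (Set.Ioi 0))))
    (f g : ℝ → ℝ) (hf : Measurable f) (hb : BddFun f) (hg : Measurable g) (hgb : BddFun g)
    (h : Tendsto (fun t => f t - g t) atTop (nhds 0)) :
    ω f = ω g := by
  have := omega_zero hsandwich (f - g) (hf.sub hg) (bdd_sub hb hgb) h
  rw [map_sub] at this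
  linarith

lemma omega_bound
    (hpos : ∀ f : ℝ → ℝ, Measurable f → BddFun f →
      (∀ᵐ x ∂((volume : Measure ℝ).restrict (Set.Ioi 0)), 0 ≤ f x) → 0 ≤ ω f)
    (f : ℝ → ℝ) (hf : Measurable f) (C : ℝ) (hC : ∀ x, |f x| ≤ C) :
    |ω f| ≤ ω 1 * C := by
  have hb : BddFun f := ⟨C, hC⟩
  have h1 : BddFun (1 : ℝ → ℝ) := ⟨1, fun x => by simp⟩
  have m1 : Measurable (C • (1 : ℝ → ℝ)) := measurable_one.const_smul C
  have a1 := hpos (C • (1 : ℝ → ℝ) - f) (m1.sub hf) (bdd_sub (bdd_mul h1 C) hb)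
    (Eventually.of_forall fun x => by
      have := (abs_le.1 (hC x)).2
      simp only [Pi.sub_apply, Pi.smul_apply, Pi.one_apply, smul_eq_mul, mul_one]; linarith)
  have a2 := hpos (f - (-C) • (1 : ℝ → ℝ)) (hf.sub (measurable_one.const_smul _)) (bdd_sub hb (bdd_mul h1 (-C)))
    (Eventually.of_forall fun x => by
      have := (abs_le.1 (hC x)).1
      simp only [Pi.sub_apply, Pi.smul_apply, Pi.one_apply, smul_eq_mul, mul_one]; linarith)
  rw [map_sub, map_smul, smul_eq_mul] at a1 a2
  rw [abs_le]
  constructor <;> linarith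

/-- the restriction of ω to bounded continuous functions -/
noncomputable def Om (ω : (ℝ → ℝ) →ₗ[ℝ] ℝ)
    (hpos : ∀ f : ℝ → ℝ, Measurable f → BddFun f →
      (∀ᵐ x ∂((volume : Measure ℝ).restrict (Set.Ioi 0)), 0 ≤ f x) → 0 ≤ ω f) :
    BoundedContinuousFunction ℝ ℝ →L[ℝ] ℝ :=
  LinearMap.mkContinuous
    { toFun := fun f => ω (fun t => f t)
      map_add' := fun f g => ω.map_add (fun t => f t) (fun t => g t)
      map_smul' := fun c f => ω.map_smul c (fun t => f t) } (ω 1) (fun f =>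
        omega_bound hpos _ f.continuous.measurable _ (fun x => f.norm_coe_le_norm x))

end omega

lemma integrable_nu {e p : ℝ} (he : 0 < e) (hp : 0 < p) :
    IntegrableOn (fun s : ℝ => (1 + s) ^ (-1 - e / p)) (Ioi 0) ∧
    ∫ s in Ioi (0:ℝ), (1 + s) ^ (-1 - e / p) = p / e := by
  have h : 0 < e / p := by positivity
  have hder : ∀ x ∈ Ici (0:ℝ), HasDerivAt (fun s : ℝ => -(p / e) * (1 + s) ^ (-(e / p)))
      ((1 + x) ^ (-1 - e / p)) x := by
    intro x hx
    have hx' : (0:ℝ) < 1 + x := by have : (0:ℝ) ≤ x := hx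
                                   linarith
    have := (((hasDerivAt_id x).const_add 1).rpow_const (p := -(e / p)) (Or.inl hx'.ne')).const_mul
      (-(p / e))
    refine this.congr_deriv ?_
    rw [show -(e / p) - 1 = -1 - e / p by ring]
    simp only [id]
    field_simp
  have hlim : Tendsto (fun s : ℝ => -(p / e) * (1 + s) ^ (-(e / p))) atTop (nhds 0) := by
    have h1 := (tendsto_rpow_neg_atTop h).comp (tendsto_atTop_add_const_left atTop (1:ℝ) tendsto_id)
    simpa using h1.const_mul (-(p / e))
  have hnn : ∀ x ∈ Ioi (0:ℝ), 0 ≤ (1 + x) ^ (-1 - e / p) := fun x hx => by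
    have : (0:ℝ) < x := hx
    positivity
  refine ⟨integrableOn_Ioi_deriv_of_nonneg' hder hnn hlim, ?_⟩
  rw [integral_Ioi_of_hasDerivAt_of_nonneg' hder hnn hlim]
  simp

lemma pointwise_x {x K e p : ℝ} (hx : 0 ≤ x) (hxK : x ≤ K) (hK : 1 ≤ K) (he : 0 < e) (he1 : e ≤ 1)
    (hp : 1 < p) : |x ^ (p + e) - x ^ p| ≤ (K ^ (p + 1) * Real.log K + 1) * e := by
  have hlK : 0 ≤ Real.log K := Real.log_nonneg hK
  have hKp : 0 ≤ K ^ (p + 1) := by positivity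
  rcases hx.eq_or_lt with rfl | hx
  · rw [Real.zero_rpow (by linarith), Real.zero_rpow (by linarith)]; simp; positivity
  have key : x ^ (p + e) - x ^ p = x ^ p * (x ^ e - 1) := by rw [Real.rpow_add hx]; ring
  have hxe : x ^ e = Real.exp (Real.log x * e) := Real.rpow_def_of_pos hx e
  have hxe' : 1 - x ^ e ≤ -(Real.log x * e) := by
    have := Real.add_one_le_exp (Real.log x * e)
    rw [hxe]; linarith
  have hxp : 0 < x ^ p := by positivity
  rw [key, abs_mul, abs_of_pos hxp]
  rcases le_total x 1 with h | h
  · have hle : x ^ e ≤ 1 := Real.rpow_le_one hx.le h he.le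
    rw [abs_of_nonpos (by linarith)]
    have h2 : -Real.log x ≤ x⁻¹ := by
      rw [← Real.log_inv]
      have := Real.log_le_sub_one_of_pos (inv_pos.2 hx)
      linarith
    have h3 : x ^ p * x⁻¹ ≤ 1 := by
      rw [← Real.rpow_neg_one x, ← Real.rpow_add hx]
      exact Real.rpow_le_one hx.le h (by linarith)
    calc x ^ p * -(x ^ e - 1) ≤ x ^ p * (x⁻¹ * e) := by
          apply mul_le_mul_of_nonneg_left _ hxp.le
          nlinarith
      _ = (x ^ p * x⁻¹) * e := by ring
      _ ≤ 1 * e := by gcongr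
      _ ≤ _ := by
          apply mul_le_mul_of_nonneg_right _ he.le
          nlinarith [mul_nonneg hKp hlK]
  · have hle : 1 ≤ x ^ e := Real.one_le_rpow h he.le
    rw [abs_of_nonneg (by linarith)]
    have hlx : 0 ≤ Real.log x := Real.log_nonneg h
    have h1 : x ^ e - 1 ≤ x ^ e * (Real.log x * e) := by
      have h5 : 1 - x ^ (-e) ≤ Real.log x * e := by
        have := Real.add_one_le_exp (Real.log x * (-e))
        rw [Real.rpow_def_of_pos hx]; linarith
      have h6 : x ^ e * x ^ (-e) = 1 := by rw [← Real.rpow_add hx]; simp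
      have := mul_le_mul_of_nonneg_left h5 (by positivity : 0 ≤ x ^ e)
      linarith [mul_sub (x ^ e) 1 (x ^ (-e))]
    have h2 : x ^ p * x ^ e ≤ K ^ (p + 1) := by
      rw [← Real.rpow_add hx]
      calc x ^ (p + e) ≤ x ^ (p + 1) := Real.rpow_le_rpow_of_exponent_le h (by linarith)
        _ ≤ K ^ (p + 1) := Real.rpow_le_rpow hx.le hxK (by linarith)
    calc x ^ p * (x ^ e - 1) ≤ x ^ p * (x ^ e * (Real.log x * e)) := by gcongr
      _ = (x ^ p * x ^ e) * (Real.log x * e) := by ring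
      _ ≤ K ^ (p + 1) * (Real.log K * e) := by gcongr
      _ ≤ _ := by nlinarith

/-- The Fubini computation. -/
lemma fubini {a : ℝ → ℝ} (ha : Measurable a) (ha0 : ∀ s, 0 ≤ a s) {c : ℝ} (hc : 0 < c)
    (hinteg : IntegrableOn (fun s => a s * (1 + s) ^ (-(1 / c))) (Ioi 0)) :
    ∫ s in Ioi (0:ℝ), a s * (1 + s) ^ (-(1 / c)) =
      ∫ u in Ioi (0:ℝ), Real.exp (-u) * ∫ s in (0:ℝ)..(Real.exp (c * u) - 1), a s := by
  set f : ℝ → ℝ → ℝ := fun s u =>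
    if Real.log (1 + s) < c * u then a s * Real.exp (-u) else 0 with hf
  have hfm : Measurable (Function.uncurry f) := by
    have : MeasurableSet {q : ℝ × ℝ | Real.log (1 + q.1) < c * q.2} :=
      measurableSet_lt (by fun_prop) (by fun_prop)
    exact Measurable.ite this (by fun_prop) measurable_const
  have hin : ∀ s ∈ Ioi (0:ℝ), (fun u => f s u) =
      (Ioi (Real.log (1 + s) / c)).indicator (fun u => a s * Real.exp (-u)) := by
    intro s hs
    ext u
    simp only [hf, indicator, mem_Ioi, div_lt_iff₀ hc, mul_comm c u]
  have hsub : ∀ s ∈ Ioi (0:ℝ), Ioi (Real.log (1 + s) / c) ⊆ Ioi 0 := by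
    intro s hs u hu
    have hs' : (0:ℝ) < s := hs
    have : 0 ≤ Real.log (1 + s) / c := div_nonneg (Real.log_nonneg (by linarith)) hc.le
    exact lt_of_le_of_lt this hu
  have hval : ∀ s ∈ Ioi (0:ℝ), ∫ u in Ioi (0:ℝ), f s u = a s * (1 + s) ^ (-(1 / c)) := by
    intro s hs
    have hs' : (0:ℝ) < s := hs
    rw [hin s hs, setIntegral_indicator measurableSet_Ioi, inter_eq_right.2 (hsub s hs),
      integral_const_mul, integral_exp_neg_Ioi, Real.rpow_def_of_pos (by linarith)]
    congr 2
    ring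
  have hnn : ∀ s u, 0 ≤ f s u := by
    intro s u
    simp only [hf]
    split_ifs
    · exact mul_nonneg (ha0 s) (Real.exp_pos _).le
    · exact le_rfl
  have hI : Integrable (Function.uncurry f)
      ((volume.restrict (Ioi (0:ℝ))).prod (volume.restrict (Ioi (0:ℝ)))) := by
    rw [integrable_prod_iff hfm.aestronglyMeasurable]
    constructor
    · refine (ae_restrict_iff' measurableSet_Ioi).2 (Eventually.of_forall fun s hs => ?_)
      change Integrable (fun u => f s u) _
      rw [hin s hs]
      refine Integrable.indicator ?_ measurableSet_Ioi
      exact (integrableOn_exp_neg_Ioi 0).const_mul (a s)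
    · refine Integrable.congr hinteg ?_
      refine (ae_restrict_iff' measurableSet_Ioi).2 (Eventually.of_forall fun s hs => ?_)
      simp only [Function.uncurry, Real.norm_eq_abs, abs_of_nonneg (hnn _ _)]
      exact (hval s hs).symm
  rw [← setIntegral_congr_fun measurableSet_Ioi hval, integral_integral_swap hI]
  refine setIntegral_congr_fun measurableSet_Ioi fun u hu => ?_
  have hu' : (0:ℝ) < u := hu
  have hb : 0 ≤ Real.exp (c * u) - 1 := by
    have := Real.one_le_exp (mul_pos hc hu').le
    linarith
  have : ∀ s ∈ Ioi (0:ℝ), f s u = (Iio (Real.exp (c * u) - 1)).indicator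
      (fun s => Real.exp (-u) * a s) s := by
    intro s hs
    have hs' : (0:ℝ) < s := hs
    simp only [hf, indicator, mem_Iio, Real.log_lt_iff_lt_exp (by linarith : 0 < 1 + s),
      lt_sub_iff_add_lt']
    simp only [mul_comm]
  rw [setIntegral_congr_fun measurableSet_Ioi this, setIntegral_indicator measurableSet_Iio,
    integral_const_mul, intervalIntegral.integral_of_le hb, integral_Ioc_eq_integral_Ioo]
  rfl

/-- The standing hypotheses on the (globally extended) singular value function. -/
structure Good (p K : ℝ) (m : ℝ → ℝ) : Prop where
  hp : 1 < p
  hK : 1 ≤ K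
  anti : Antitone m
  nn : ∀ s, 0 ≤ m s
  bd : ∀ s, 0 ≤ s → m s ≤ K * (1 + s) ^ (-(1 / p))

/-- Primitive of `m ^ p`. -/
noncomputable def FF (p : ℝ) (m : ℝ → ℝ) (t : ℝ) : ℝ := ∫ s in (0:ℝ)..t, m s ^ p

/-- Primitive in the logarithmic scale. -/
noncomputable def GG (p : ℝ) (m : ℝ → ℝ) (x : ℝ) : ℝ := FF p m (Real.exp (p * |x|) - 1)

section good
variable {p K : ℝ} {m : ℝ → ℝ}

lemma Good.antip (h : Good p K m) : Antitone (fun s => m s ^ p) := fun a b hab =>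
  Real.rpow_le_rpow (h.nn b) (h.anti hab) (by linarith [h.hp])

lemma Good.meas (h : Good p K m) : Measurable m := h.anti.measurable

lemma Good.measp (h : Good p K m) : Measurable (fun s => m s ^ p) := h.antip.measurable

lemma Good.bdp (h : Good p K m) {s : ℝ} (hs : 0 ≤ s) : m s ^ p ≤ K ^ p * (1 + s)⁻¹ := by
  have hp := h.hp
  have hK := h.hK
  calc m s ^ p ≤ (K * (1 + s) ^ (-(1 / p))) ^ p :=
        Real.rpow_le_rpow (h.nn s) (h.bd s hs) (by linarith)
    _ = K ^ p * (1 + s)⁻¹ := by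
        rw [Real.mul_rpow (by linarith) (by positivity), ← Real.rpow_mul (by positivity)]
        congr 1
        rw [show -(1 / p) * p = -1 by field_simp, Real.rpow_neg_one]

lemma Good.FF_sub (h : Good p K m) {a b : ℝ} (ha : 0 ≤ a) (hab : a ≤ b) :
    0 ≤ FF p m b - FF p m a ∧
    FF p m b - FF p m a ≤ K ^ p * (Real.log (1 + b) - Real.log (1 + a)) := by
  have hinteg : ∀ x y : ℝ, IntervalIntegrable (fun s => m s ^ p) volume x y :=
    fun x y => h.antip.intervalIntegrable
  have h1 : FF p m b - FF p m a = ∫ s in a..b, m s ^ p :=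
    intervalIntegral.integral_interval_sub_left (hinteg 0 b) (hinteg 0 a)
  rw [h1]
  refine ⟨intervalIntegral.integral_nonneg hab fun s _ => Real.rpow_nonneg (h.nn s) _, ?_⟩
  have hder : ∀ x ∈ Set.uIcc a b, HasDerivAt (fun s : ℝ => Real.log (1 + s)) (1 + x)⁻¹ x := by
    intro x hx
    rw [Set.uIcc_of_le hab] at hx
    have hx' : 1 + x ≠ 0 := by linarith [hx.1]
    simpa using ((hasDerivAt_id x).const_add 1).log hx'
  have hcont : ContinuousOn (fun x : ℝ => (1 + x)⁻¹) (Set.uIcc a b) := by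
    refine ContinuousOn.inv₀ (by fun_prop) fun x hx => ?_
    rw [Set.uIcc_of_le hab] at hx
    linarith [hx.1]
  have h2 : ∫ s in a..b, (1 + s)⁻¹ = Real.log (1 + b) - Real.log (1 + a) :=
    intervalIntegral.integral_eq_sub_of_hasDerivAt hder hcont.intervalIntegrable
  rw [← h2, ← intervalIntegral.integral_const_mul]
  exact intervalIntegral.integral_mono_on hab (hinteg a b)
    (hcont.intervalIntegrable.const_mul _) fun x hx => h.bdp (ha.trans hx.1)

lemma FF_zero : FF p m 0 = 0 := by simp [FF]

lemma Good.FF_bd (h : Good p K m) {b : ℝ} (hb : 0 ≤ b) :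
    0 ≤ FF p m b ∧ FF p m b ≤ K ^ p * Real.log (1 + b) := by
  simpa [FF_zero] using h.FF_sub le_rfl hb

lemma Good.GG_lip_aux (h : Good p K m) {x y : ℝ} (hxy : |x| ≤ |y|) :
    |GG p m y - GG p m x| ≤ K ^ p * p * |y - x| := by
  have hp := h.hp
  have hK := h.hK
  have e1 : Real.exp (p * |x|) ≤ Real.exp (p * |y|) := by gcongr
  have e2 : 1 ≤ Real.exp (p * |x|) := Real.one_le_exp (by positivity)
  have := h.FF_sub (a := Real.exp (p * |x|) - 1) (b := Real.exp (p * |y|) - 1)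
    (by linarith) (by linarith)
  simp only [add_sub_cancel, Real.log_exp] at this
  rw [GG, GG, abs_of_nonneg this.1]
  refine this.2.trans ?_
  have h3 : |y| - |x| ≤ |y - x| := abs_sub_abs_le_abs_sub y x
  have : 0 ≤ K ^ p * p := by positivity
  nlinarith

lemma Good.GG_lip (h : Good p K m) (x y : ℝ) :
    |GG p m y - GG p m x| ≤ K ^ p * p * |y - x| := by
  rcases le_total |x| |y| with h1 | h1
  · exact h.GG_lip_aux h1
  · rw [abs_sub_comm, abs_sub_comm y]
    exact h.GG_lip_aux h1

lemma Good.GG_cont (h : Good p K m) : Continuous (GG p m) := by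
  have hp := h.hp
  have hK := h.hK
  have : LipschitzWith (Real.toNNReal (K ^ p * p)) (GG p m) := by
    refine LipschitzWith.of_dist_le_mul fun x y => ?_
    rw [Real.dist_eq, Real.dist_eq, Real.coe_toNNReal _ (by positivity)]
    exact h.GG_lip y x
  exact this.continuous

lemma GG_zero : GG p m 0 = 0 := by simp [GG, FF_zero]

lemma Good.GG_abs (h : Good p K m) (x : ℝ) : |GG p m x| ≤ K ^ p * p * |x| := by
  simpa [GG_zero] using h.GG_lip 0 x

/-- Truncated logarithm. -/
noncomputable def LL (t : ℝ) : ℝ := Real.log (max t (Real.exp 1))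

lemma LL_ge (t : ℝ) : 1 ≤ LL t := by
  rw [LL, Real.le_log_iff_exp_le (lt_of_lt_of_le (Real.exp_pos 1) (le_max_right _ _))]
  exact le_max_right _ _

lemma LL_eq {t : ℝ} (h : Real.exp 1 ≤ t) : LL t = Real.log t := by rw [LL, max_eq_left h]

lemma LL_cont : Continuous LL := by
  unfold LL
  refine Continuous.log (by fun_prop) fun x => ?_
  exact (lt_of_lt_of_le (Real.exp_pos 1) (le_max_right _ _)).ne'

/-- The family `u ↦ G(u log t) / log t`. -/
noncomputable def WW (h : Good p K m) (u : ℝ) : BoundedContinuousFunction ℝ ℝ :=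
  BoundedContinuousFunction.ofNormedAddCommGroup (fun t => GG p m (u * LL t) / LL t)
    ((h.GG_cont.comp (continuous_const.mul LL_cont)).div LL_cont
      fun t => by linarith [LL_ge t]) (K ^ p * p * |u|) (fun t => by
        have h1 := LL_ge t
        rw [Real.norm_eq_abs, abs_div, abs_of_pos (by linarith : 0 < LL t),
          div_le_iff₀ (by linarith)]
        have := h.GG_abs (u * LL t)
        rwa [abs_mul, abs_of_pos (by linarith : 0 < LL t), ← mul_assoc] at this)

lemma WW_apply (h : Good p K m) (u t : ℝ) : WW h u t = GG p m (u * LL t) / LL t := rfl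

lemma WW_norm (h : Good p K m) (u : ℝ) : ‖WW h u‖ ≤ K ^ p * p * |u| := by
  have hp := h.hp
  have hK := h.hK
  exact BoundedContinuousFunction.norm_ofNormedAddCommGroup_le _ (by positivity) _

lemma WW_cont (h : Good p K m) : Continuous (WW h) := by
  have hp := h.hp
  have hK := h.hK
  have : LipschitzWith (Real.toNNReal (K ^ p * p)) (WW h) := by
    refine LipschitzWith.of_dist_le_mul fun x y => ?_
    rw [Real.coe_toNNReal _ (by positivity)]
    refine (BoundedContinuousFunction.dist_le (by positivity)).2 fun t => ?_
    have h1 := LL_ge t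
    rw [Real.dist_eq, WW_apply, WW_apply, ← sub_div, abs_div, abs_of_pos (by linarith : 0 < LL t),
          div_le_iff₀ (by linarith), Real.dist_eq]
    have := h.GG_lip (y * LL t) (x * LL t)
    rwa [← sub_mul, abs_mul, abs_of_pos (by linarith : 0 < LL t), ← mul_assoc] at this
  exact this.continuous

lemma int_exp : IntegrableOn (fun u : ℝ => Real.exp (-u) * u) (Ioi 0) ∧
    ∫ u in Ioi (0:ℝ), Real.exp (-u) * u = 1 := by
  have h1 := Real.GammaIntegral_convergent (s := 2) (by norm_num)
  have h2 := Real.Gamma_eq_integral (s := 2) (by norm_num)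
  norm_num at h1 h2
  exact ⟨h1, h2.symm⟩

lemma WW_int (h : Good p K m) : IntegrableOn (fun u : ℝ => Real.exp (-u) • WW h u) (Ioi 0) := by
  have hc : Continuous (fun u : ℝ => Real.exp (-u) • WW h u) :=
    (by fun_prop : Continuous fun u : ℝ => Real.exp (-u)).smul (WW_cont h)
  refine Integrable.mono' (int_exp.1.const_mul (K ^ p * p))
    (hc.continuousOn.aestronglyMeasurable measurableSet_Ioi) ?_
  refine (ae_restrict_iff' measurableSet_Ioi).2 (Eventually.of_forall fun u hu => ?_)
  have hu' : (0:ℝ) < u := hu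
  rw [norm_smul, Real.norm_eq_abs, abs_of_pos (Real.exp_pos _)]
  have := WW_norm h u
  rw [abs_of_pos hu'] at this
  calc _ ≤ Real.exp (-u) * (K ^ p * p * u) := by gcongr
    _ = _ := by ring

/-- The averaged function. -/
noncomputable def PhiF (h : Good p K m) : BoundedContinuousFunction ℝ ℝ :=
  ∫ u in Ioi (0:ℝ), Real.exp (-u) • WW h u

lemma PhiF_apply (h : Good p K m) (t : ℝ) :
    PhiF h t = (∫ u in Ioi (0:ℝ), Real.exp (-u) * GG p m (u * LL t)) / LL t := by
  have := (BoundedContinuousFunction.evalCLM ℝ t).integral_comp_comm (WW_int h)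
  rw [PhiF, ← integral_div]
  refine this.symm.trans ?_
  congr 1
  ext u
  simp [WW_apply, mul_div_assoc]

/-- Comparison of the zeta function with the averaged function. -/
lemma Good.compare (h : Good p K m) {t : ℝ} (ht : Real.exp 1 < t) :
    |(∫ s in Ioi (0:ℝ), m s ^ (p + 1 / Real.log t)) / Real.log t - PhiF h t| ≤
      (K ^ (p + 1) * Real.log K + 1) * p / Real.log t := by
  have hp := h.hp
  have hK := h.hK
  have hp0 : 0 < p := by linarith
  rw [PhiF_apply, LL_eq ht.le]
  have hr : 1 < Real.log t := by
    rwa [Real.lt_log_iff_exp_lt ((Real.exp_pos 1).trans ht)]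
  generalize Real.log t = r at hr
  have hr0 : 0 < r := by linarith
  set C := K ^ (p + 1) * Real.log K + 1 with hC
  set e := 1 / r with he
  have he0 : 0 < e := by positivity
  have he1 : e ≤ 1 := by rw [he, div_le_one hr0]; exact hr.le
  have hc : 0 < p * r := by positivity
  obtain ⟨hi1, hi2⟩ := integrable_nu he0 hp0
  have hexp : -(1 / (p * r)) = -(e / p) := by rw [he]; field_simp
  have hI2 : IntegrableOn (fun s => m s ^ p * (1 + s) ^ (-(1 / (p * r)))) (Ioi 0) := by
    refine Integrable.mono' (hi1.const_mul (K ^ p))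
      (h.measp.mul (by fun_prop)).aestronglyMeasurable ?_
    refine (ae_restrict_iff' measurableSet_Ioi).2 (Eventually.of_forall fun s hs => ?_)
    have hs' : (0:ℝ) < s := hs
    have hm := h.nn s
    rw [Real.norm_eq_abs, abs_of_nonneg (by positivity), hexp, sub_eq_add_neg,
      Real.rpow_add (by linarith), Real.rpow_neg_one, ← mul_assoc]
    have := h.bdp hs'.le
    gcongr
  have hpt : ∀ s ∈ Ioi (0:ℝ), |m s ^ (p + e) - m s ^ p * (1 + s) ^ (-(1 / (p * r)))| ≤
      (C * e) * (1 + s) ^ (-1 - e / p) := by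
    intro s hs
    have hs' : (0:ℝ) < s := hs
    have hm := h.nn s
    have h1s : 0 < 1 + s := by linarith
    set n := (1 + s) ^ (-(1 / p)) with hn
    have hn0 : 0 < n := by positivity
    have hx : m s = (m s / n) * n := by field_simp
    have hx0 : 0 ≤ m s / n := by positivity
    have hxK : m s / n ≤ K := by rw [div_le_iff₀ hn0]; exact h.bd s hs'.le
    have hP := pointwise_x hx0 hxK hK he0 he1 hp
    have hnpe : n ^ (p + e) = (1 + s) ^ (-1 - e / p) := by
      rw [hn, ← Real.rpow_mul h1s.le]; congr 1; field_simp; ring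
    have hne : (1 + s) ^ (-(1 / (p * r))) = n ^ e := by
      rw [hn, ← Real.rpow_mul h1s.le, hexp]; congr 1; ring
    have e1 : m s ^ (p + e) = (m s / n) ^ (p + e) * n ^ (p + e) := by
      rw [← Real.mul_rpow hx0 hn0.le, ← hx]
    have e2 : m s ^ p = (m s / n) ^ p * n ^ p := by
      rw [← Real.mul_rpow hx0 hn0.le, ← hx]
    rw [hne, e1, e2, mul_assoc, ← Real.rpow_add hn0, ← sub_mul, abs_mul,
      abs_of_pos (by positivity : 0 < n ^ (p + e)), hnpe]
    gcongr
  have hI1 : IntegrableOn (fun s => m s ^ (p + e)) (Ioi 0) := by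
    have hd : IntegrableOn (fun s => m s ^ (p + e) - m s ^ p * (1 + s) ^ (-(1 / (p * r))))
        (Ioi 0) := by
      refine Integrable.mono' (hi1.const_mul (C * e))
        ((h.meas.pow_const _).sub (h.measp.mul (by fun_prop))).aestronglyMeasurable ?_
      exact (ae_restrict_iff' measurableSet_Ioi).2 (Eventually.of_forall hpt)
    refine (hd.add hI2).congr (Eventually.of_forall fun s => ?_)
    simp
  have hF := fubini h.measp (fun s => Real.rpow_nonneg (h.nn s) p) hc hI2
  have hF' : ∫ u in Ioi (0:ℝ), Real.exp (-u) * GG p m (u * r) =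
      ∫ s in Ioi (0:ℝ), m s ^ p * (1 + s) ^ (-(1 / (p * r))) := by
    rw [hF]
    refine setIntegral_congr_fun measurableSet_Ioi fun u hu => ?_
    have hu' : (0:ℝ) < u := hu
    simp only [GG, FF]
    rw [abs_of_pos (by positivity), show p * (u * r) = p * r * u by ring]
  rw [hF', ← sub_div, abs_div, abs_of_pos hr0]
  gcongr
  rw [← integral_sub hI1 hI2]
  refine (norm_integral_le_of_norm_le
    (f := fun s => m s ^ (p + e) - m s ^ p * (1 + s) ^ (-(1 / (p * r))))
    (hi1.const_mul (C * e))
    ((ae_restrict_iff' measurableSet_Ioi).2 (Eventually.of_forall hpt))).trans ?_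
  rw [integral_const_mul, hi2]
  apply le_of_eq
  field_simp

end good

section main
variable {p K : ℝ} {m : ℝ → ℝ}

lemma zeta_meas (h : Good p K m) : Measurable (zetaPFn p m) := by
  have h1 : Measurable (fun t : ℝ => ∫ s in Ioi (0:ℝ), m s ^ (p + 1 / Real.log t)) := by
    have hm := h.meas
    have : Measurable (Function.uncurry fun (t s : ℝ) => m s ^ (p + 1 / Real.log t)) := by
      simp only [Function.uncurry_def]
      exact (hm.comp measurable_snd).pow (by fun_prop)
    exact (this.stronglyMeasurable.integral_prod_right
      (ν := (volume : Measure ℝ).restrict (Ioi 0))).measurable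
  exact Measurable.ite measurableSet_Ioi (h1.div Real.measurable_log) measurable_const

lemma zeta_bdd (h : Good p K m) : BddFun (zetaPFn p m) := by
  have hp := h.hp
  have hK := h.hK
  have hlK : 0 ≤ Real.log K := Real.log_nonneg hK
  refine ⟨(K ^ (p + 1) * Real.log K + 1) * p + ‖PhiF h‖, fun t => ?_⟩
  simp only [zetaPFn]
  split_ifs with ht
  · have h1 := h.compare ht
    have h2 := (PhiF h).norm_coe_le_norm t
    rw [Real.norm_eq_abs] at h2
    have hr : 1 ≤ Real.log t := by
      rw [Real.le_log_iff_exp_le ((Real.exp_pos 1).trans ht)]; exact ht.le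
    have h3 := div_le_self (by positivity : 0 ≤ (K ^ (p + 1) * Real.log K + 1) * p) hr
    rw [abs_le] at *
    constructor <;> linarith
  · rw [abs_zero]; positivity

lemma FF_meas (h : Good p K m) : Measurable (FF p m) :=
  (intervalIntegral.continuous_primitive
    (fun x y => h.antip.intervalIntegrable) 0).measurable

lemma g_meas (h : Good p K m) : Measurable (gPFn p m) :=
  Measurable.ite measurableSet_Ioi ((FF_meas h).div (by fun_prop)) measurable_const

lemma g_bdd (h : Good p K m) : BddFun (gPFn p m) := by
  have hp := h.hp
  have hK := h.hK
  refine ⟨K ^ p, fun t => ?_⟩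
  simp only [gPFn]
  split_ifs with ht
  · have := h.FF_bd ht.le
    have hl : 0 < Real.log (1 + t) := Real.log_pos (by linarith)
    rw [← FF, abs_div, abs_of_nonneg this.1, abs_of_pos hl, div_le_iff₀ hl]
    exact this.2
  · rw [abs_zero]; positivity

lemma bcf_bdd (f : BoundedContinuousFunction ℝ ℝ) : BddFun (fun t => f t) :=
  ⟨‖f‖, fun x => f.norm_coe_le_norm x⟩

variable (ω : (ℝ → ℝ) →ₗ[ℝ] ℝ)

theorem main (h : Good p K m)
    (hpos : ∀ f : ℝ → ℝ, Measurable f → BddFun f →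
      (∀ᵐ x ∂((volume : Measure ℝ).restrict (Set.Ioi 0)), 0 ≤ f x) → 0 ≤ ω f)
    (hsandwich : ∀ f : ℝ → ℝ, Measurable f → BddFun f →
      liminf f (atTop ⊓ ae ((volume : Measure ℝ).restrict (Set.Ioi 0))) ≤ ω f ∧
        ω f ≤ limsup f (atTop ⊓ ae ((volume : Measure ℝ).restrict (Set.Ioi 0))))
    (hpow : ∀ f : ℝ → ℝ, Measurable f → BddFun f →
      ∀ a : ℝ, 0 < a → ω (fun t => f (t ^ a)) = ω f) :
    BddFun (zetaPFn p m) ∧ BddFun (gPFn p m) ∧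
      ω (zetaPFn p m) = p * ω (gPFn p m) := by
  refine ⟨zeta_bdd h, g_bdd h, ?_⟩
  have hp := h.hp
  have hp0 : 0 < p := by linarith
  have hK := h.hK
  -- step 1: the zeta function and the averaged function
  have s1 : ω (zetaPFn p m) = Om ω hpos (PhiF h) := by
    refine omega_congr hsandwich _ _ (zeta_meas h) (zeta_bdd h)
      (PhiF h).continuous.measurable (bcf_bdd _) ?_
    have hl : Tendsto (fun t => (K ^ (p + 1) * Real.log K + 1) * p / Real.log t) atTop (nhds 0) :=
      Real.tendsto_log_atTop.const_div_atTop _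
    refine squeeze_zero_norm' ?_ hl
    filter_upwards [eventually_gt_atTop (Real.exp 1)] with t ht
    simp only [zetaPFn, if_pos ht]
    exact h.compare ht
  -- step 2: power invariance
  have s2 : ∀ u ∈ Ioi (0:ℝ), Om ω hpos (WW h u) = u * Om ω hpos (WW h 1) := by
    intro u hu
    have hu' : (0:ℝ) < u := hu
    have e1 := hpow (fun t => WW h 1 t) (WW h 1).continuous.measurable (bcf_bdd _) u hu'
    change ω (fun t => WW h u t) = u * ω (fun t => WW h 1 t)
    rw [← e1, ← smul_eq_mul, ← map_smul]
    have mm : Measurable (fun t : ℝ => WW h 1 (t ^ u)) :=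
      (WW h 1).continuous.measurable.comp (by fun_prop)
    have bb : BddFun (fun t : ℝ => WW h 1 (t ^ u)) :=
      ⟨‖WW h 1‖, fun x => (WW h 1).norm_coe_le_norm _⟩
    refine omega_congr hsandwich _ _ (WW h u).continuous.measurable (bcf_bdd _)
      (mm.const_smul u) (bdd_mul bb u) ?_
    refine tendsto_const_nhds.congr' ?_
    have ev := (tendsto_rpow_atTop hu').eventually (eventually_ge_atTop (Real.exp 1))
    filter_upwards [eventually_ge_atTop (Real.exp 1), ev] with t ht ht2
    have ht0 : 0 < t := (Real.exp_pos 1).trans_le ht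
    have hlt : 1 ≤ Real.log t := by rwa [Real.le_log_iff_exp_le ht0]
    simp only [Pi.smul_apply, smul_eq_mul, WW_apply]
    rw [LL_eq ht, LL_eq ht2, Real.log_rpow ht0, one_mul]
    field_simp
    ring
  -- step 3: from `WW 1` to the Dixmier trace
  have s3 : Om ω hpos (WW h 1) = p * ω (gPFn p m) := by
    rw [← hpow (gPFn p m) (g_meas h) (g_bdd h) p hp0, ← smul_eq_mul, ← map_smul]
    have mm : Measurable (fun t : ℝ => gPFn p m (t ^ p)) :=
      (g_meas h).comp (by fun_prop)
    have bb : BddFun (fun t : ℝ => gPFn p m (t ^ p)) := by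
      obtain ⟨C, hC⟩ := g_bdd h
      exact ⟨C, fun x => hC _⟩
    refine omega_congr hsandwich _ _ (WW h 1).continuous.measurable (bcf_bdd _)
      (mm.const_smul p) (bdd_mul bb p) ?_
    have hl : Tendsto (fun t => (K ^ p * 2) / Real.log t) atTop (nhds 0) :=
      Real.tendsto_log_atTop.const_div_atTop _
    refine squeeze_zero_norm' ?_ hl
    filter_upwards [eventually_ge_atTop (Real.exp 1)] with t ht
    have ht0 : 0 < t := (Real.exp_pos 1).trans_le ht
    have hlt : 1 ≤ Real.log t := by rwa [Real.le_log_iff_exp_le ht0]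
    simp only [Pi.smul_apply, smul_eq_mul, WW_apply]
    rw [LL_eq ht, one_mul, GG, abs_of_pos (by linarith), gPFn, if_pos (by positivity), ← FF]
    have hT : Real.exp (p * Real.log t) = t ^ p := by
      rw [Real.rpow_def_of_pos ht0, mul_comm]
    rw [hT]
    have hlT : Real.log (t ^ p) = p * Real.log t := Real.log_rpow ht0 p
    generalize t ^ p = T at *
    have hT0 : 1 < T := by rw [← hT]; exact Real.one_lt_exp_iff.2 (by positivity)
    obtain ⟨d1, d2⟩ := h.FF_sub (a := T - 1) (b := T) (by linarith) (by linarith)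
    obtain ⟨d3, d4⟩ := h.FF_bd (b := T) (by linarith)
    rw [add_sub_cancel, hlT] at d2
    have dl : Real.log (1 + T) - p * Real.log t ≤ 1 := by
      rw [← hlT, ← Real.log_div (by linarith) (by linarith)]
      have h7 := Real.log_le_sub_one_of_pos (x := (1 + T) / T) (by positivity)
      have h8 : (1 + T) / T ≤ 2 := by rw [div_le_iff₀ (by linarith)]; linarith
      linarith
    have dl0 : p * Real.log t ≤ Real.log (1 + T) := by
      rw [← hlT]; exact Real.log_le_log (by linarith) (by linarith)
    generalize Real.log (1 + T) = b at *
    generalize FF p m T = A at *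
    generalize FF p m (T - 1) = B at *
    generalize Real.log t = a at *
    have ha : 0 < a := by linarith
    have hpa : 0 < p * a := by positivity
    have hb : 0 < b := by linarith
    have hKp : 0 < K ^ p := by positivity
    have hdA : 0 ≤ A / b ∧ A / b ≤ K ^ p := ⟨by positivity, by rwa [div_le_iff₀ hb]⟩
    have key : B / a - p * (A / b) = ((B - A) + (A / b) * (b - p * a)) / a := by
      field_simp
      ring
    rw [key, Real.norm_eq_abs, abs_div, abs_of_pos ha]
    gcongr
    have k1 : K ^ p * (b - p * a) ≤ K ^ p := by nlinarith
    have k2 : (A / b) * (b - p * a) ≤ K ^ p * 1 := 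
      mul_le_mul hdA.2 dl (by linarith) hKp.le
    have k3 : 0 ≤ (A / b) * (b - p * a) := mul_nonneg hdA.1 (by linarith)
    rw [abs_le]
    constructor <;> linarith
  have s4 : Om ω hpos (PhiF h) = ∫ u in Ioi (0:ℝ), Om ω hpos (Real.exp (-u) • WW h u) :=
    ((Om ω hpos).integral_comp_comm (WW_int h)).symm
  rw [s1, s4, ← s3]
  have s5 : ∫ u in Ioi (0:ℝ), Om ω hpos (Real.exp (-u) • WW h u) =
      ∫ u in Ioi (0:ℝ), (Real.exp (-u) * u) * Om ω hpos (WW h 1) := by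
    refine setIntegral_congr_fun measurableSet_Ioi fun u hu => ?_
    simp only [map_smul, smul_eq_mul]
    rw [s2 u hu, mul_assoc]
  rw [s5, integral_mul_const, int_exp.2, one_mul]

end main

end ZR

/-- **Lemma 12.1.** Let `p > 1`, let `μ : [0,∞) → [0,1]` be nonincreasing with
`μ(s) ≤ K(1+s)^{−1/p}` (the singular value function of a positive `T ∈ L^{(p,∞)}`),
and let `ω` be a positive linear functional on `L∞((0,∞))` lying between the essential
liminf and limsup at `+∞`, invariant under all dilations `D_c`, all power maps `P^a` and
the logarithmic Cesàro operator `M`.  Then `Z(t) = (1/log t)∫₀^∞ μ(s)^{p+1/log t} ds` and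
`g_p(t) = (1/log(1+t))∫₀^t μ(s)^p ds` are bounded and `ω(Z) = p·ω(g_p)`. -/
theorem zeta_residue_eq_p_mul_dixmier_trace (p : ℝ) (hp : 1 < p) (K : ℝ) (hK : 0 < K)
    (μ : ℝ → ℝ) (hμ0 : ∀ s : ℝ, 0 ≤ s → 0 ≤ μ s) (hμ1 : ∀ s : ℝ, 0 ≤ s → μ s ≤ 1)
    (hmono : AntitoneOn μ (Set.Ici 0))
    (hμbd : ∀ s : ℝ, 0 ≤ s → μ s ≤ K * (1 + s) ^ (-(1 / p)))
    (ω : (ℝ → ℝ) →ₗ[ℝ] ℝ)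
    -- ω is positive
    (hpos : ∀ f : ℝ → ℝ, Measurable f → BddFun f →
      (∀ᵐ x ∂((volume : Measure ℝ).restrict (Set.Ioi 0)), 0 ≤ f x) → 0 ≤ ω f)
    -- ω lies between the essential liminf and limsup at +∞
    (hsandwich : ∀ f : ℝ → ℝ, Measurable f → BddFun f →
      liminf f (atTop ⊓ ae ((volume : Measure ℝ).restrict (Set.Ioi 0))) ≤ ω f ∧
        ω f ≤ limsup f (atTop ⊓ ae ((volume : Measure ℝ).restrict (Set.Ioi 0))))
    -- ω is dilation invariant: ω ∘ D_c = ω for all c > 0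
    (hdil : ∀ f : ℝ → ℝ, Measurable f → BddFun f →
      ∀ c : ℝ, 0 < c → ω (fun t => f (t / c)) = ω f)
    -- ω is power invariant: ω ∘ P^a = ω for all a > 0
    (hpow : ∀ f : ℝ → ℝ, Measurable f → BddFun f →
      ∀ a : ℝ, 0 < a → ω (fun t => f (t ^ a)) = ω f)
    -- ω is M-invariant
    (hM : ∀ f : ℝ → ℝ, Measurable f → BddFun f → ω (Mop f) = ω f) :
    BddFun (zetaPFn p μ) ∧ BddFun (gPFn p μ) ∧
      ω (zetaPFn p μ) = p * ω (gPFn p μ) := by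
  obtain ⟨m, hm⟩ : ∃ m : ℝ → ℝ, m = fun s => μ (max s 0) := ⟨_, rfl⟩
  have hme : ∀ s, 0 ≤ s → μ s = m s := fun s hs => by rw [hm]; simp [hs]
  have hg : ZR.Good p (max K 1) m := by
    refine ⟨hp, le_max_right _ _, ?_, ?_, ?_⟩
    · intro a b hab
      rw [hm]
      exact hmono (Set.mem_Ici.2 (le_max_right _ _)) (Set.mem_Ici.2 (le_max_right _ _))
        (max_le_max_right 0 hab)
    · intro s
      rw [hm]
      exact hμ0 _ (le_max_right _ _)
    · intro s hs
      rw [← hme s hs]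
      refine (hμbd s hs).trans ?_
      have := le_max_left K 1
      gcongr
  have hZ : zetaPFn p μ = zetaPFn p m := by
    funext t
    simp only [zetaPFn]
    congr 2
    refine setIntegral_congr_fun measurableSet_Ioi fun s hs => ?_
    simp only [hme s (le_of_lt hs)]
  have hG : gPFn p μ = gPFn p m := by
    funext t
    simp only [gPFn]
    split_ifs with ht
    · congr 1
      refine intervalIntegral.integral_congr fun s hs => ?_
      rw [Set.uIcc_of_le ht.le] at hs
      simp only [hme s hs.1]
    · rfl
  rw [hZ, hG]
  exact ZR.main ω hg hpos hsandwich hpow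
end
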